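/- For every prime N with N < 1000 and N ≡ 1 (mod 3), and every integer m with m² + m + 1 ≡ 0 (mod N), the real number f(N,m) = 2N⁶ · ∑_h (Γ((N − ⟨hm⟩)/N) · Γ((N − ⟨hm²⟩)/N) / Γ(⟨hm⟩/N))² · ₃F₂(h/N, h/N, ⟨hm²⟩/N; 1, 1; 1), where the sum is over h ∈ {1, ..., N − 1} with h + ⟨hm⟩ + ⟨hm²⟩ = N, is not an integer. -/

import Mathlib

/-!
The proof is a rigorous numerical evaluation: for each of the 80 primes `N` and both roots of
`m² + m + 1` modulo `N`, the number `f(N, m)` is enclosed in an interval that contains no integer.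
Everything is arranged so that the evaluation uses only arithmetic on natural numbers, which the
kernel performs quickly; the content of the proof is the error analysis.

*Gamma values.* On `[0, 1]` an explicit polynomial `R` of degree 41 approximates
`2 ^ 110 * Γ(12 + x) / Γ(12)` with error `2 ^ (-87)` in the logarithm (`log_Gamma_close`). To see
this, compare the second derivatives of `log R` and of the Bohr–Mollerup sequence
`logGammaSeq (12 + x) n`. The latter is a partial sum of the trigamma series `∑ 1 / (z + k) ^ 2`,
which is matched with the truncated asymptotic expansion `tau` by a telescoping comparison
(`sum_trigamma`); the polynomial inequalities needed are read off from signs and sizes of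
coefficients. Closeness of the second derivatives and of the values at `0` and `1` gives closeness
on `[0, 1]` (`interp_abs`), and `n → ∞` gives the claim for `log Γ`. The functional equation then
yields all values `Γ(i / N)` (`gam_spec`).

*The series.* `₃F₂(a, a, c; 1, 1; 1)` converges slowly. A contiguity relation (`contiguous`)
rewrites a series `∑ (P + R n) (a)ₙ² (c)ₙ / ((e)ₙ (y)ₙ n!)` as one of the same shape with the lower
parameter `y` raised by one, the difference being a telescoping series. Applying it repeatedly
brings the lower parameters to `(17, 17)` with positive integer data `P`, `R` (`AccInv`,
`mat_spec`), after which 32 terms suffice for a relative error of `2 ^ (-82)` (`log_trunc`).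

*Conclusion.* Combining the errors (`termI_spec`, `summ_spec`), the sum in `f(N, m)` multiplied by
`2 ^ 100` differs from a computed integer `S` by at most `N + 1 + S / 2 ^ 79`. The Boolean `check`
states that the resulting interval for `f(N, m)` avoids the integers (`check_sound`), and it
evaluates to `true` in all cases (`table_checked`).
-/

/-- For a prime `N` and an integer `a` not divisible by `N`, `rep N a` is the unique
representative of `a` modulo `N` lying in `{1, 2, ..., N − 1}`. -/
def rep (N : ℕ) (a : ℤ) : ℕ := (a % (N : ℤ)).toNat

/-- The Pochhammer symbol `(α, n) = Γ(α + n)/Γ(α)`, for a real `α` and natural `n`. -/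
noncomputable def poch (a : ℝ) (n : ℕ) : ℝ := Real.Gamma (a + n) / Real.Gamma a

/-- The generalized hypergeometric series ₃F₂(α₁, α₂, α₃; β₁, β₂; x) at x = 1. -/
noncomputable def F32 (a₁ a₂ a₃ b₁ b₂ : ℝ) : ℝ :=
  ∑' n : ℕ, poch a₁ n * poch a₂ n * poch a₃ n / (poch b₁ n * poch b₂ n * poch 1 n)

/-- The value f(N,1) of the paper for the quotient C_N = C_N^{1,m} of the Fermat curve:
f(N,m) = 2N⁶ · ∑_h (Γ((N − ⟨hm⟩)/N)·Γ((N − ⟨hm²⟩)/N)/Γ(⟨hm⟩/N))²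
· ₃F₂(h/N, h/N, ⟨hm²⟩/N; 1, 1; 1), the sum over h ∈ {1,...,N−1} with
h + ⟨hm⟩ + ⟨hm²⟩ = N. -/
noncomputable def fval (N : ℕ) (m : ℤ) : ℝ :=
  2 * (N : ℝ) ^ 6 *
    ∑ h ∈ (Finset.Icc 1 (N - 1)).filter
        (fun h : ℕ => h + rep N ((h : ℤ) * m) + rep N ((h : ℤ) * m ^ 2) = N),
      (Real.Gamma (((N - rep N ((h : ℤ) * m) : ℕ) : ℝ) / N) *
          Real.Gamma (((N - rep N ((h : ℤ) * m ^ 2) : ℕ) : ℝ) / N) /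
          Real.Gamma (((rep N ((h : ℤ) * m) : ℕ) : ℝ) / N)) ^ 2 *
        F32 ((h : ℝ) / N) ((h : ℝ) / N) (((rep N ((h : ℤ) * m ^ 2) : ℕ) : ℝ) / N) 1 1

/-! ### Polynomials with integer coefficients as lists -/

/-- Value at `x` of the polynomial whose coefficients, lowest degree first, are listed in `l`. -/
noncomputable def ev : List ℤ → ℝ → ℝ
  | [], _ => 0
  | c :: l, x => c + x * ev l x

/-- Sum of two coefficient lists. -/
def padd : List ℤ → List ℤ → List ℤ
  | [], l => l
  | a :: k, [] => a :: k
  | a :: k, b :: l => (a + b) :: padd k l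

/-- Scalar multiple of a coefficient list. -/
def psmul (c : ℤ) : List ℤ → List ℤ
  | [] => []
  | a :: l => (c * a) :: psmul c l

/-- Product of two coefficient lists. -/
def pmul : List ℤ → List ℤ → List ℤ
  | [], _ => []
  | a :: k, l => padd (psmul a l) (0 :: pmul k l)

/-- Power of a coefficient list. -/
def ppow (l : List ℤ) : ℕ → List ℤ
  | 0 => [1]
  | n + 1 => pmul l (ppow l n)

/-- Composition `k ∘ l` of two coefficient lists. -/
def pcomp : List ℤ → List ℤ → List ℤ
  | [], _ => []
  | a :: k, l => padd [a] (pmul l (pcomp k l))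

/-- Derivative of a coefficient list: `(a + x q)' = q + x q'`. -/
def pder : List ℤ → List ℤ
  | [] => []
  | _ :: l => padd l (0 :: pder l)

/-- Sum of the absolute values of the coefficients. -/
def pnorm : List ℤ → ℕ
  | [] => 0
  | a :: l => a.natAbs + pnorm l

/-- All coefficients are nonnegative. -/
def pnonneg : List ℤ → Bool
  | [] => true
  | a :: l => decide (0 ≤ a) && pnonneg l

lemma ev_padd (k l : List ℤ) (x : ℝ) : ev (padd k l) x = ev k x + ev l x := by
  induction k generalizing l with
  | nil => simp [padd, ev]
  | cons a k ih =>
    cases l with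
    | nil => simp [padd, ev]
    | cons b l => simp only [padd, ev, ih]; push_cast; ring

lemma ev_psmul (c : ℤ) (l : List ℤ) (x : ℝ) : ev (psmul c l) x = c * ev l x := by
  induction l with
  | nil => simp [psmul, ev]
  | cons a l ih => simp only [psmul, ev, ih]; push_cast; ring

lemma ev_pmul (k l : List ℤ) (x : ℝ) : ev (pmul k l) x = ev k x * ev l x := by
  induction k with
  | nil => simp [pmul, ev]
  | cons a k ih => simp only [pmul, ev_padd, ev_psmul, ev, ih]; push_cast; ring

lemma ev_ppow (l : List ℤ) (n : ℕ) (x : ℝ) : ev (ppow l n) x = ev l x ^ n := by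
  induction n with
  | zero => simp [ppow, ev]
  | succ n ih => rw [ppow, ev_pmul, ih]; ring

lemma ev_pcomp (k l : List ℤ) (x : ℝ) : ev (pcomp k l) x = ev k (ev l x) := by
  induction k with
  | nil => simp [pcomp, ev]
  | cons a k ih => simp only [pcomp, ev_padd, ev_pmul, ev, ih]; ring

lemma hasDerivAt_ev (l : List ℤ) (x : ℝ) : HasDerivAt (ev l) (ev (pder l) x) x := by
  induction l with
  | nil => simpa [pder, ev] using hasDerivAt_const x (0 : ℝ)
  | cons a l ih =>
    have h := ((hasDerivAt_id x).mul ih).const_add (a : ℝ)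
    simp only [pder, ev_padd, ev]
    refine h.congr_deriv ?_
    simp

lemma abs_ev_le (l : List ℤ) {x : ℝ} (hx : 0 ≤ x) (hx1 : x ≤ 1) : |ev l x| ≤ pnorm l := by
  induction l with
  | nil => simp [ev, pnorm]
  | cons a l ih =>
    simp only [ev, pnorm]
    push_cast
    refine (abs_add_le _ _).trans ?_
    rw [abs_mul, abs_of_nonneg hx, Nat.cast_natAbs]
    push_cast
    have : x * |ev l x| ≤ 1 * |ev l x| := mul_le_mul_of_nonneg_right hx1 (abs_nonneg _)
    linarith

lemma ev_nonneg_of_pnonneg {l : List ℤ} (h : pnonneg l = true) {x : ℝ} (hx : 0 ≤ x) :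
    0 ≤ ev l x := by
  induction l with
  | nil => simp [ev]
  | cons a l ih =>
    simp only [pnonneg, Bool.and_eq_true, decide_eq_true_eq] at h
    have ha : (0 : ℝ) ≤ a := by exact_mod_cast h.1
    have := mul_nonneg hx (ih h.2)
    simp only [ev]; linarith

lemma ev_append_singleton (l : List ℤ) (a : ℤ) (x : ℝ) :
    ev (l ++ [a]) x = ev l x + a * x ^ l.length := by
  induction l with
  | nil => simp [ev]
  | cons b l ih => simp only [List.cons_append, ev, ih, List.length_cons]; ring

/-- Reversing the coefficient list corresponds to the substitution `z ↦ 1/z`. -/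
lemma ev_reverse (l : List ℤ) {z : ℝ} (hz : z ≠ 0) :
    z * ev l.reverse z = z ^ l.length * ev l z⁻¹ := by
  induction l with
  | nil => simp [ev]
  | cons a l ih =>
    rw [List.reverse_cons, ev_append_singleton, mul_add, ih, List.length_reverse,
      List.length_cons, ev, pow_succ]
    field_simp
    ring

/-! ### Approximation of the Gamma function -/

/-- One half of the error bound `K / 8` for linear interpolation when the second derivative is
bounded by `K`: the function `f x + K x² / 2` is convex. -/
lemma interp_upper {f f' f'' : ℝ → ℝ} {K : ℝ}
    (h1 : ∀ x ∈ Set.Icc (0 : ℝ) 1, HasDerivAt f (f' x) x)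
    (h2 : ∀ x ∈ Set.Icc (0 : ℝ) 1, HasDerivAt f' (f'' x) x)
    (hK : ∀ x ∈ Set.Icc (0 : ℝ) 1, |f'' x| ≤ K) {x : ℝ} (hx : 0 ≤ x) (hx1 : x ≤ 1) :
    f x ≤ (1 - x) * f 0 + x * f 1 + K / 8 := by
  have hK0 : 0 ≤ K := (abs_nonneg _).trans (hK 0 (by simp))
  have hc : ConvexOn ℝ (Set.Icc (0 : ℝ) 1) (fun x => f x + K * x ^ 2 / 2) := by
    refine convexOn_of_hasDerivWithinAt2_nonneg (f' := fun x => f' x + K * x)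
      (f'' := fun x => f'' x + K) (convex_Icc 0 1) ?_ ?_ ?_ ?_
    · intro y hy
      have := (h1 y hy).continuousAt
      exact ContinuousAt.continuousWithinAt (by fun_prop)
    · intro y hy
      rw [interior_Icc] at hy ⊢
      have := (h1 y (Set.Ioo_subset_Icc_self hy)).add
        ((((hasDerivAt_id y).pow 2).const_mul K).div_const 2)
      refine (this.congr_deriv ?_).hasDerivWithinAt
      simp; ring
    · intro y hy
      rw [interior_Icc] at hy ⊢
      have := (h2 y (Set.Ioo_subset_Icc_self hy)).add ((hasDerivAt_id y).const_mul K)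
      refine (this.congr_deriv ?_).hasDerivWithinAt
      simp
    · intro y hy
      rw [interior_Icc] at hy
      have := neg_le_of_abs_le (hK y (Set.Ioo_subset_Icc_self hy))
      linarith
  have := hc.2 (show (0 : ℝ) ∈ Set.Icc (0 : ℝ) 1 by simp) (show (1 : ℝ) ∈ Set.Icc (0 : ℝ) 1 by simp)
    (show 0 ≤ 1 - x by linarith) hx (by ring)
  simp only [smul_eq_mul, mul_zero, mul_one, zero_add] at this
  nlinarith [mul_nonneg hK0 (sq_nonneg (x - 1 / 2))]

/-- Linear interpolation has error at most `K / 8` when the second derivative is bounded by `K`. -/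
lemma interp_abs {f f' f'' : ℝ → ℝ} {K : ℝ}
    (h1 : ∀ x ∈ Set.Icc (0 : ℝ) 1, HasDerivAt f (f' x) x)
    (h2 : ∀ x ∈ Set.Icc (0 : ℝ) 1, HasDerivAt f' (f'' x) x)
    (hK : ∀ x ∈ Set.Icc (0 : ℝ) 1, |f'' x| ≤ K) {x : ℝ} (hx : 0 ≤ x) (hx1 : x ≤ 1) :
    |f x - ((1 - x) * f 0 + x * f 1)| ≤ K / 8 := by
  have a := interp_upper h1 h2 hK hx hx1
  have b := interp_upper (f := fun x => -f x) (f' := fun x => -f' x) (f'' := fun x => -f'' x)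
    (fun x hx => (h1 x hx).neg) (fun x hx => (h2 x hx).neg)
    (fun x hx => by rw [abs_neg]; exact hK x hx) hx hx1
  rw [abs_le]; constructor <;> linarith

/-- Coefficients of a polynomial of degree 41 approximating `2 ^ 110 * Γ(12 + x) / Γ(12)` on the
unit interval: the rounded Taylor coefficients at `0`. -/
def coefR : List ℕ :=
  [1298074214633706907132624082305024, 3170756141850453301028259753391997,
   3928944802312135683130135990554411, 3289243047384480538933780151898890,
   2091064717213803903706653461737827, 1075890530400577535364106188060673,
   466359305728013196583844431602468, 175061354920707247299598428764847,
   58062085993017909996413336714668, 17276392345451200356611508263854,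
   4667386545042493497198016909071, 1155965534347438881049809009541,
   264552245065449693488952457191, 56318929888552170044913923093, 11215469381987979842918185125,
   2099417577037416267199975900, 370953076202293003479285062, 62097174900777027548141007,
   9880166651738899192796276, 1498465734572550367152155, 217189178090666532868180,
   30153992740264018582038, 4018619579843880186782, 515064113946291421197, 63599322038276431886,
   7577772261484629557, 872496615122165697, 97208668645110734, 10493184490988400,
   1098685894398360, 111704704817126, 11039190346304, 1061398488601, 99374969570, 9067575828,
   806971099, 70096248, 5947043, 493128, 39989, 3173, 247]

/-- Numerators of the truncated asymptotic expansion `1/z + 1/(2z²) + ∑ B₂ₖ / z^(2k+1)` of the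
trigamma function, as a polynomial in `1/z`, over the common denominator `tauD`. -/
def tauT : List ℤ :=
  [0, 7420738134810, 3710369067405, 1236789689135, 0, -247357937827, 0, 176684241305, 0,
   -247357937827, 0, 562177131425, 0, -1878289396027, 0, 8657527823945, 0, -52629038889427, 0,
   407926716490865, 0, -3926492443810027, 0, 45950124679644185, 0, -642489386001245827, 0,
   10578389600509635905, 0, -202573024297797980827, 0, 4464174132126822658025, 0,
   -112174220870690446495027, 0, 3188057765036785838742545, 0, -101750602671765022556964427, 0,
   3623786261867543729253761465]

/-- The common denominator of the coefficients in `tauT`. -/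
def tauD : ℕ := 7420738134810

/-- The truncated asymptotic expansion of the trigamma function. -/
noncomputable def tau (z : ℝ) : ℝ := ev tauT z⁻¹ / tauD

/-- The coefficients `coefR` as integers. -/
def coefZ : List ℤ := coefR.map Int.ofNat

/-- The polynomial `tauD * z ^ 39 * tau z` in the variable `x`, where `z = k + x`. -/
def thetaL (k : ℤ) : List ℤ := pcomp tauT.reverse [k, 1]

/-- With `z = 12 + x`, the numerator of `1/z² - (tau z - tau (z + 1))` over
`tauD * (z * (z + 1)) ^ 39`. -/
def stepL : List ℤ :=
  padd (padd (psmul tauD (pmul (ppow [12, 1] 37) (ppow [13, 1] 39)))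
    (psmul (-1) (pmul (thetaL 12) (ppow [13, 1] 39)))) (pmul (ppow [12, 1] 39) (thetaL 13))

/-- With `z = 12 + x`, the numerator of `1/z - 1/(z + 1)` over `tauD * (z * (z + 1)) ^ 39`. -/
def teleL : List ℤ := psmul tauD (pmul (ppow [12, 1] 38) (ppow [13, 1] 38))

/-- With `R` the polynomial `coefR`, the numerator of `(log R)'' - tau (12 + x)` over
`tauD * (12 + x) ^ 39 * R ^ 2`. -/
def resL : List ℤ :=
  padd (psmul tauD (pmul (ppow [12, 1] 39)
      (padd (pmul coefZ (pder (pder coefZ))) (psmul (-1) (pmul (pder coefZ) (pder coefZ))))))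
    (psmul (-1) (pmul (pmul coefZ coefZ) (thetaL 12)))

set_option maxRecDepth 100000 in
/-- The coefficients of `teleL` dominate those of `2 ^ 86 * stepL`; with `stepL_bound_right` this
gives `tau_step`. -/
lemma stepL_bound_left : pnonneg (padd teleL (psmul (-2 ^ 86) stepL)) = true := by decide +kernel

set_option maxRecDepth 100000 in
lemma stepL_bound_right : pnonneg (padd teleL (psmul (2 ^ 86) stepL)) = true := by decide +kernel

set_option maxRecDepth 100000 in
/-- The right-hand side is a lower bound on `[0, 1]` for the denominator of which `resL` is the
numerator. -/
lemma resL_bound : 2 ^ 85 * pnorm resL ≤ tauD * 12 ^ 39 * 2 ^ 220 := by decide +kernel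

lemma ev_shift (k : ℤ) (x : ℝ) : ev [k, 1] x = k + x := by simp [ev]

lemma tauD_pos : (0 : ℝ) < tauD := by norm_num [tauD]

lemma ev_thetaL (k : ℤ) {x : ℝ} (h : (k : ℝ) + x ≠ 0) :
    ev (thetaL k) x = tauD * (k + x) ^ 39 * tau (k + x) := by
  have hr := ev_reverse tauT h
  have hl : tauT.length = 40 := rfl
  have hD := tauD_pos.ne'
  rw [hl, pow_succ', mul_assoc] at hr
  rw [thetaL, ev_pcomp, ev_shift, mul_left_cancel₀ h hr, tau]
  field_simp

/-- `tau` satisfies the functional equation of the trigamma function up to an error that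
telescopes. -/
lemma tau_step {x : ℝ} (hx : 0 ≤ x) :
    |1 / (12 + x) ^ 2 - (tau (12 + x) - tau (12 + x + 1))| ≤
      (1 / 2 ^ 86) * (1 / (12 + x) - 1 / (12 + x + 1)) := by
  have h1 := ev_nonneg_of_pnonneg stepL_bound_left hx
  have h2 := ev_nonneg_of_pnonneg stepL_bound_right hx
  have hz : 0 < 12 + x := by linarith
  have hz1 : 0 < 13 + x := by linarith
  have e : 12 + x + 1 = 13 + x := by ring
  have hD := tauD_pos
  have hS : ev stepL x = (tauD * (12 + x) ^ 39 * (13 + x) ^ 39) *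
      (1 / (12 + x) ^ 2 - (tau (12 + x) - tau (13 + x))) := by
    simp only [stepL, ev_padd, ev_psmul, ev_pmul, ev_ppow, ev_shift]
    rw [ev_thetaL 12 (by push_cast; exact hz.ne'), ev_thetaL 13 (by push_cast; exact hz1.ne')]
    push_cast
    field_simp
    ring
  have hT : ev teleL x = (tauD * (12 + x) ^ 39 * (13 + x) ^ 39) *
      (1 / (12 + x) - 1 / (13 + x)) := by
    simp only [teleL, ev_psmul, ev_pmul, ev_ppow, ev_shift]
    push_cast
    field_simp
    ring
  rw [ev_padd, ev_psmul, hS, hT] at h1 h2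
  rw [e]
  have hQ : (0 : ℝ) < tauD * (12 + x) ^ 39 * (13 + x) ^ 39 := by positivity
  generalize (1 / (12 + x) ^ 2 - (tau (12 + x) - tau (13 + x))) = u at *
  generalize (1 / (12 + x) - 1 / (13 + x)) = v at *
  generalize (tauD * (12 + x) ^ 39 * (13 + x) ^ 39 : ℝ) = Q at *
  push_cast at h1 h2
  have h1' : 0 ≤ Q * (v - 2 ^ 86 * u) := by linarith
  have h2' : 0 ≤ Q * (v + 2 ^ 86 * u) := by linarith
  have h1'' := nonneg_of_mul_nonneg_right h1' hQ
  have h2'' := nonneg_of_mul_nonneg_right h2' hQ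
  rw [abs_le]; constructor <;> linarith

lemma abs_tau_le {z : ℝ} (hz : 1 ≤ z) : |tau z| ≤ pnorm tauT / z := by
  have hD := tauD_pos
  have h0 : 0 < z := by linarith
  have : tau z = z⁻¹ * ev tauT.tail z⁻¹ / tauD := by
    simp only [tau, tauT, ev, List.tail]; push_cast; ring
  have hb := abs_ev_le tauT.tail (inv_nonneg.2 h0.le) (inv_le_one_of_one_le₀ hz)
  have hn : pnorm tauT.tail = pnorm tauT := by decide +kernel
  have hD1 : (1 : ℝ) ≤ tauD := by norm_num [tauD]
  rw [hn] at hb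
  rw [this, abs_div, abs_mul, abs_of_pos hD, abs_of_pos (inv_pos.2 h0), div_le_div_iff₀ hD h0,
    mul_right_comm, inv_mul_cancel₀ h0.ne', one_mul]
  exact hb.trans (le_mul_of_one_le_right (by positivity) hD1)

lemma sum_trigamma {x : ℝ} (hx : 0 ≤ x) (n : ℕ) :
    |∑ m ∈ Finset.range n, 1 / (12 + x + m) ^ 2 - (tau (12 + x) - tau (12 + x + n))| ≤
      (1 / 2 ^ 86) * (1 / (12 + x) - 1 / (12 + x + n)) := by
  induction n with
  | zero => simp
  | succ n ih =>
    have h := tau_step (x := x + n) (by positivity)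
    have e1 : 12 + (x + n) = 12 + x + n := by ring
    rw [e1] at h
    rw [Finset.sum_range_succ]
    push_cast
    rw [← add_assoc]
    rw [abs_le] at *
    constructor <;> linarith [ih.1, ih.2, h.1, h.2]

/-- The approximating polynomial. -/
noncomputable def polyR (x : ℝ) : ℝ := ev coefZ x

lemma polyR_ge {x : ℝ} (hx : 0 ≤ x) : 2 ^ 110 ≤ polyR x := by
  have h1 : polyR x = 2 ^ 110 + x * ev coefZ.tail x := by
    simp only [polyR, coefZ, coefR, List.map, ev, List.tail]; norm_num
  have h2 : pnonneg coefZ.tail = true := by decide +kernel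
  rw [h1]
  linarith [mul_nonneg hx (ev_nonneg_of_pnonneg h2 hx)]

lemma polyR_res {x : ℝ} (hx : 0 ≤ x) (hx1 : x ≤ 1) :
    |(ev (pder (pder coefZ)) x * polyR x - ev (pder coefZ) x * ev (pder coefZ) x) / polyR x ^ 2
      - tau (12 + x)| ≤ 1 / 2 ^ 85 := by
  have hz : 0 < 12 + x := by linarith
  have hD := tauD_pos
  have hR := polyR_ge hx
  have hR0 : 0 < polyR x := by linarith [show (0 : ℝ) < 2 ^ 110 by positivity]
  have hres := abs_ev_le resL hx hx1
  have hb : (2 : ℝ) ^ 85 * pnorm resL ≤ tauD * 12 ^ 39 * 2 ^ 220 := by exact_mod_cast resL_bound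
  have hS : ev resL x = (tauD * (12 + x) ^ 39 * polyR x ^ 2) *
      ((ev (pder (pder coefZ)) x * polyR x - ev (pder coefZ) x * ev (pder coefZ) x) / polyR x ^ 2
      - tau (12 + x)) := by
    simp only [resL, ev_padd, ev_psmul, ev_pmul, ev_ppow, ev_shift]
    rw [ev_thetaL 12 (by push_cast; exact hz.ne')]
    rw [show ev coefZ x = polyR x from rfl]
    push_cast
    field_simp
    ring
  have hQ : (tauD * 12 ^ 39 * 2 ^ 220 : ℝ) ≤ tauD * (12 + x) ^ 39 * polyR x ^ 2 := by
    have : (2 : ℝ) ^ 220 = (2 ^ 110) ^ 2 := by norm_num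
    rw [this]
    have : (12 : ℝ) ≤ 12 + x := by linarith
    gcongr
  have hQ0 : (0 : ℝ) < tauD * 12 ^ 39 * 2 ^ 220 := by positivity
  rw [hS, abs_mul, abs_of_pos (hQ0.trans_le hQ)] at hres
  generalize |(ev (pder (pder coefZ)) x * polyR x - ev (pder coefZ) x * ev (pder coefZ) x) /
    polyR x ^ 2 - tau (12 + x)| = u at *
  have hu : (tauD * 12 ^ 39 * 2 ^ 220 : ℝ) * (2 ^ 85 * u) ≤ (tauD * 12 ^ 39 * 2 ^ 220) * 1 := by
    by_cases hu0 : 0 ≤ u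
    · nlinarith [mul_le_mul_of_nonneg_right hQ hu0]
    · nlinarith
  have := le_of_mul_le_mul_left hu hQ0
  rw [le_div_iff₀ (by positivity)]; linarith

/-- `R(1) = 12 * R(0)` up to a tiny relative error, as for `Γ(13) = 12 * Γ(12)`. -/
lemma polyR_one : |Real.log (polyR 1 / (12 * 2 ^ 110))| ≤ 1 / 2 ^ 104 := by
  have h : polyR 1 = 15576890575604482885591488987660267 := by
    simp only [polyR, coefZ, coefR, List.map, ev]; norm_num
  rw [h, abs_le]
  constructor
  · rw [Real.le_log_iff_exp_le (by norm_num)]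
    have := Real.one_sub_inv_le_log_of_pos (x := 15576890575604482885591488987660267 / (12 * 2 ^ 110)) (by norm_num)
    rw [← Real.le_log_iff_exp_le (by norm_num)]
    refine le_trans ?_ this
    norm_num
  · refine (Real.log_le_sub_one_of_pos (by norm_num)).trans ?_
    norm_num

/-- On `[0, 1]` the second derivative of `logGammaSeq (12 + x) n`, which is a partial sum of the
trigamma series, agrees with that of `log R` up to `1 / 2 ^ 84 + O(1 / n)`. -/
lemma second_deriv_close {x : ℝ} (hx : 0 ≤ x) (hx1 : x ≤ 1) (n : ℕ) :
    |∑ m ∈ Finset.range (n + 1), 1 / (12 + x + m) ^ 2 -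
      (ev (pder (pder coefZ)) x * polyR x - ev (pder coefZ) x * ev (pder coefZ) x) /
        polyR x ^ 2| ≤ 1 / 2 ^ 84 - 1 / 2 ^ 86 + (pnorm tauT : ℝ) / (n + 1 : ℕ) := by
  have h1 := sum_trigamma hx (n + 1)
  have h2 := polyR_res hx hx1
  have h3 : |tau (12 + x + (n + 1 : ℕ))| ≤ (pnorm tauT : ℝ) / (n + 1 : ℕ) := by
    refine (abs_tau_le (by linarith [(n + 1).cast_nonneg (α := ℝ)])).trans ?_
    gcongr
    linarith
  have h4 : 1 / (12 + x) - 1 / (12 + x + (n + 1 : ℕ)) ≤ 1 / 12 := by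
    have : 1 / (12 + x) ≤ 1 / 12 := by gcongr; linarith
    have : 0 ≤ 1 / (12 + x + (n + 1 : ℕ)) := by positivity
    linarith
  have h5 : (1 / 2 ^ 86) * (1 / (12 + x) - 1 / (12 + x + (n + 1 : ℕ))) ≤
      (1 / 2 ^ 86) * (1 / 12) := by gcongr
  rw [abs_le] at *
  constructor <;> linarith [h1.1, h1.2, h2.1, h2.2, h3.1, h3.2]

/-- Up to a small error, `logGammaSeq (12 + x) n - log R` is the linear interpolation of its values
at the ends of `[0, 1]`. -/
lemma logGammaSeq_close {x : ℝ} (hx : 0 ≤ x) (hx1 : x ≤ 1) (n : ℕ) :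
    |(Real.BohrMollerup.logGammaSeq (12 + x) n - Real.log (polyR x)) -
      ((1 - x) * (Real.BohrMollerup.logGammaSeq (12 + 0) n - Real.log (polyR 0)) +
        x * (Real.BohrMollerup.logGammaSeq (12 + 1) n - Real.log (polyR 1)))| ≤
      (1 / 2 ^ 84 - 1 / 2 ^ 86 + (pnorm tauT : ℝ) / (n + 1 : ℕ)) / 8 := by
  refine interp_abs (f := fun x => Real.BohrMollerup.logGammaSeq (12 + x) n - Real.log (polyR x))
    (f' := fun x => (Real.log n - ∑ m ∈ Finset.range (n + 1), 1 / (12 + x + m)) -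
      ev (pder coefZ) x / polyR x)
    (f'' := fun x => ∑ m ∈ Finset.range (n + 1), 1 / (12 + x + m) ^ 2 -
      (ev (pder (pder coefZ)) x * polyR x - ev (pder coefZ) x * ev (pder coefZ) x) /
        polyR x ^ 2) ?_ ?_ ?_ hx hx1
  · intro y hy
    have hR0 : polyR y ≠ 0 := by
      have := polyR_ge hy.1
      have h2 : (0 : ℝ) < 2 ^ 110 := by positivity
      exact (h2.trans_le this).ne'
    refine HasDerivAt.sub ?_ ((hasDerivAt_ev coefZ y).log hR0)
    unfold Real.BohrMollerup.logGammaSeq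
    refine HasDerivAt.sub ?_ ?_
    · have := (((hasDerivAt_id y).const_add 12).mul_const (Real.log n)).add_const
        (Real.log (n.factorial : ℝ))
      simpa using this
    · refine HasDerivAt.fun_sum fun m _ => ?_
      have hne : 12 + y + m ≠ 0 := by have := hy.1; positivity
      have := (((hasDerivAt_id y).const_add 12).add_const (m : ℝ)).log hne
      simpa using this
  · intro y hy
    have hR0 : polyR y ≠ 0 := by
      have := polyR_ge hy.1
      have h2 : (0 : ℝ) < 2 ^ 110 := by positivity
      exact (h2.trans_le this).ne'
    refine HasDerivAt.sub ?_ ((hasDerivAt_ev (pder coefZ) y).div (hasDerivAt_ev coefZ y) hR0)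
    have h : HasDerivAt (fun x : ℝ => ∑ m ∈ Finset.range (n + 1), 1 / (12 + x + m))
        (∑ m ∈ Finset.range (n + 1), -(1 / (12 + y + m) ^ 2)) y := by
      refine HasDerivAt.fun_sum fun m _ => ?_
      have hne : 12 + y + m ≠ 0 := by have := hy.1; positivity
      have := (((hasDerivAt_id y).const_add 12).add_const (m : ℝ)).inv hne
      simp only [one_div]
      refine this.congr_deriv ?_
      rw [neg_div, one_div]; rfl
    refine (h.const_sub (Real.log n)).congr_deriv ?_
    rw [Finset.sum_neg_distrib, neg_neg]
  · intro y hy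
    exact second_deriv_close hy.1 hy.2 n

/-- The polynomial `coefR` approximates `2 ^ 110 * Γ(12 + x) / Γ(12)` on `[0, 1]`. -/
lemma log_Gamma_close {x : ℝ} (hx : 0 ≤ x) (hx1 : x ≤ 1) :
    |Real.log (Real.Gamma (12 + x)) - Real.log (polyR x) -
      Real.log (39916800 / 2 ^ 110)| ≤ 1 / 2 ^ 87 := by
  have lim : ∀ y : ℝ, 0 ≤ y → Filter.Tendsto (Real.BohrMollerup.logGammaSeq (12 + y))
      Filter.atTop (nhds (Real.log (Real.Gamma (12 + y)))) := fun y hy =>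
    Real.BohrMollerup.tendsto_log_gamma (by linarith)
  have hl := (((lim x hx).sub_const (Real.log (polyR x))).sub
    ((((lim 0 le_rfl).sub_const (Real.log (polyR 0))).const_mul (1 - x)).add
    (((lim 1 zero_le_one).sub_const (Real.log (polyR 1))).const_mul x))).abs
  have hr : Filter.Tendsto (fun n : ℕ => (1 / 2 ^ 84 - 1 / 2 ^ 86 +
      (pnorm tauT : ℝ) / (n + 1 : ℕ)) / 8) Filter.atTop
      (nhds ((1 / 2 ^ 84 - 1 / 2 ^ 86 + 0) / 8)) := by
    refine Filter.Tendsto.div_const (Filter.Tendsto.const_add _ ?_) _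
    exact (tendsto_const_div_atTop_nhds_zero_nat (pnorm tauT : ℝ)).comp
      (Filter.tendsto_add_atTop_nat 1)
  have hle := le_of_tendsto_of_tendsto' hl hr fun n => logGammaSeq_close hx hx1 n
  have g0 : Real.Gamma (12 + 0) = 39916800 := by
    rw [show (12 + 0 : ℝ) = (11 : ℕ) + 1 by norm_num, Real.Gamma_nat_eq_factorial]
    norm_num [Nat.factorial]
  have g1 : Real.Gamma (12 + 1) = 12 * 39916800 := by
    rw [show (12 + 1 : ℝ) = (12 : ℕ) + 1 by norm_num, Real.Gamma_nat_eq_factorial]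
    norm_num [Nat.factorial]
  have r0 : polyR 0 = 2 ^ 110 := by
    simp only [polyR, coefZ, coefR, List.map, ev]; norm_num
  have r1 : (0 : ℝ) < polyR 1 := by
    have h2 : (0 : ℝ) < 2 ^ 110 := by positivity
    exact h2.trans_le (polyR_ge zero_le_one)
  have hR1 := polyR_one
  have e0 : Real.log 39916800 - Real.log (2 ^ 110) = Real.log (39916800 / 2 ^ 110) :=
    (Real.log_div (by norm_num) (by norm_num)).symm
  rw [g0, g1, r0, e0] at hle
  have e : Real.log (12 * 39916800) - Real.log (polyR 1) =
      Real.log (39916800 / 2 ^ 110) - Real.log (polyR 1 / (12 * 2 ^ 110)) := by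
    rw [← Real.log_div (by norm_num) r1.ne', ← Real.log_div (by norm_num) (by positivity)]
    congr 1
    field_simp
  rw [e] at hle
  generalize Real.log (polyR 1 / (12 * 2 ^ 110)) = u at *
  generalize Real.log (39916800 / 2 ^ 110) = v at *
  generalize Real.log (Real.Gamma (12 + x)) - Real.log (polyR x) = w at *
  have hxu : |x * u| ≤ 1 / 2 ^ 104 := by
    rw [abs_mul, abs_of_nonneg hx]
    calc x * |u| ≤ 1 * |u| := by gcongr
      _ ≤ _ := by linarith
  rw [abs_le] at *
  constructor <;> nlinarith [hle.1, hle.2, hxu.1, hxu.2]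

/-! ### The hypergeometric terms and their decay -/

/-- The `n`-th term `(a)ₙ² (c)ₙ / ((x)ₙ (y)ₙ (1)ₙ)` of `₃F₂(a, a, c; x, y; 1)`. -/
noncomputable def tt (a c x y : ℝ) (n : ℕ) : ℝ :=
  ∏ j ∈ Finset.range n, (a + j) ^ 2 * (c + j) / ((x + j) * (y + j) * (1 + j))

lemma tt_zero (a c x y : ℝ) : tt a c x y 0 = 1 := by simp [tt]

lemma tt_succ (a c x y : ℝ) (n : ℕ) :
    tt a c x y (n + 1) =
      tt a c x y n * ((a + n) ^ 2 * (c + n) / ((x + n) * (y + n) * (1 + n))) := by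
  rw [tt, Finset.prod_range_succ, tt]

lemma tt_comm (a c x y : ℝ) (n : ℕ) : tt a c x y n = tt a c y x n := by
  unfold tt
  refine Finset.prod_congr rfl fun j _ => ?_
  rw [mul_comm (x + (j : ℝ))]

lemma tt_pos {a c x y : ℝ} (ha : 0 < a) (hc : 0 < c) (hx : 0 < x) (hy : 0 < y) (n : ℕ) :
    0 < tt a c x y n := by
  unfold tt
  exact Finset.prod_pos fun j _ => by positivity

/-- Raising a lower parameter by one. -/
lemma tt_raise {a c x y : ℝ} (hx : 0 < x) (hy : 0 < y) (n : ℕ) :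
    y * tt a c x y n = (y + n) * tt a c x (y + 1) n := by
  induction n with
  | zero => simp [tt_zero]
  | succ n ih =>
    rw [tt_succ, tt_succ, ← mul_assoc, ih]
    push_cast
    field_simp
    ring

lemma tt_le_one_one {a c x y : ℝ} (ha : 0 < a) (hc : 0 < c) (hx : 1 ≤ x) (hy : 1 ≤ y) (n : ℕ) :
    tt a c x y n ≤ tt a c 1 1 n := by
  unfold tt
  refine Finset.prod_le_prod (fun j _ => by positivity) fun j _ => ?_
  gcongr

/-- The main inequality between consecutive terms, which uses `a + c ≤ 1`. -/
lemma ratio_le {a c : ℝ} (ha : 0 < a) (ha1 : a ≤ 1) (hac : a + c ≤ 1) {n : ℝ} (hn : 1 ≤ n) :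
    (a + n) ^ 2 * (c + n) ≤ (1 + n) ^ 2 * n := by
  have h1 : (a + n) ^ 2 * (c + n) ≤ (a + n) ^ 2 * (1 - a + n) := by gcongr; linarith
  have h2 : 0 ≤ (1 - a) * ((1 + n) * (n - 1) + (1 - a) * (n + 2) - (1 - a) ^ 2) := by
    refine mul_nonneg (by linarith) ?_
    nlinarith [mul_nonneg (show 0 ≤ 1 + n by linarith) (show 0 ≤ n - 1 by linarith),
      mul_nonneg (show 0 ≤ 1 - a by linarith) (show 0 ≤ n + 2 - (1 - a) by linarith)]
  nlinarith

/-- Strengthening of `ratio_le` with a gain proportional to `(1 + n) ^ 2`. -/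
lemma ratio_gap {a c : ℝ} (ha : 0 < a) (ha1 : a < 1) (hc : 0 < c) (hac : a + c ≤ 1) :
    ∃ δ > 0, ∀ n : ℝ, 1 ≤ n → δ * (1 + n) ^ 2 ≤ n * (1 + n) ^ 2 - (a + n) ^ 2 * (c + n) := by
  have hs : 0 < 2 - (2 * a + c) := by linarith
  have hk : 0 < 4 - (1 + a) ^ 2 * (1 + c) := by
    have h1 : (1 + a) ^ 2 * (1 + c) ≤ (1 + a) ^ 2 * (2 - a) := by gcongr; linarith
    have h2 : 0 < (1 - a) ^ 2 * (2 + a) := by have : 0 < 1 - a := by linarith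
                                              positivity
    nlinarith
  have ht : 0 ≤ 1 - (a ^ 2 + 2 * a * c) := by nlinarith
  refine ⟨min (2 - (2 * a + c)) (4 - (1 + a) ^ 2 * (1 + c)) / 4, by positivity, fun n hn => ?_⟩
  have m1 := min_le_left (2 - (2 * a + c)) (4 - (1 + a) ^ 2 * (1 + c))
  have m2 := min_le_right (2 - (2 * a + c)) (4 - (1 + a) ^ 2 * (1 + c))
  have m0 : 0 < min (2 - (2 * a + c)) (4 - (1 + a) ^ 2 * (1 + c)) := by positivity
  generalize min (2 - (2 * a + c)) (4 - (1 + a) ^ 2 * (1 + c)) = μ at *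
  have e1 : μ / 4 * (1 + n) ^ 2 ≤ μ * n ^ 2 := by
    nlinarith [mul_nonneg m0.le (mul_nonneg (show 0 ≤ n - 1 by linarith)
      (show 0 ≤ 3 * n + 1 by linarith))]
  refine e1.trans ?_
  have n2 : 1 ≤ n ^ 2 := by nlinarith
  by_cases hq : 0 ≤ 1 - (a ^ 2 + 2 * a * c) - a ^ 2 * c
  · nlinarith [mul_le_mul_of_nonneg_right m1 (sq_nonneg n),
      mul_nonneg ht (show 0 ≤ n - 1 by linarith)]
  · push Not at hq
    nlinarith [mul_le_mul_of_nonneg_right m2 (sq_nonneg n),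
      mul_nonneg ht (show 0 ≤ n - 1 by linarith), mul_nonneg (neg_nonneg.2 hq.le)
      (show 0 ≤ n ^ 2 - 1 by linarith)]

/-- The series converges and `n` times its `n`-th term tends to `0`; the latter makes the boundary
terms of the telescoping sums vanish. -/
lemma tt_decay {a c : ℝ} (ha : 0 < a) (ha1 : a < 1) (hc : 0 < c) (hac : a + c ≤ 1) :
    Summable (tt a c 1 1) ∧
      Filter.Tendsto (fun n : ℕ => (n : ℝ) * tt a c 1 1 n) Filter.atTop (nhds 0) := by
  obtain ⟨δ, hδ, hgap⟩ := ratio_gap ha ha1 hc hac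
  set t := tt a c 1 1 with ht
  have tpos : ∀ n, 0 < t n := fun n => tt_pos ha hc one_pos one_pos n
  -- `b n = n * t n`, shifted by one so that the gap estimate applies
  set b : ℕ → ℝ := fun n => ((n + 1 : ℕ) : ℝ) * t (n + 1) with hb
  have bpos : ∀ n, 0 < b n := fun n => mul_pos (by positivity) (tpos _)
  have hstep : ∀ n, δ * t (n + 1) ≤ b n - b (n + 1) := by
    intro n
    have h1 := hgap ((n + 1 : ℕ) : ℝ) (by simp)
    have h2 : b n - b (n + 1) = t (n + 1) * ((((n + 1 : ℕ) : ℝ) * (1 + ((n + 1 : ℕ) : ℝ)) ^ 2 -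
        (a + ((n + 1 : ℕ) : ℝ)) ^ 2 * (c + ((n + 1 : ℕ) : ℝ))) /
          (1 + ((n + 1 : ℕ) : ℝ)) ^ 2) := by
      simp only [hb]
      rw [ht, tt_succ _ _ _ _ (n + 1)]
      push_cast
      field_simp
      ring
    rw [h2, mul_comm δ]
    refine mul_le_mul_of_nonneg_left ?_ (tpos _).le
    rw [le_div_iff₀ (by positivity)]
    exact h1
  have banti : Antitone b := antitone_nat_of_succ_le fun n => by
    have := hstep n
    have := mul_pos hδ (tpos (n + 1))
    linarith
  have hsum1 : Summable fun n => δ * t (n + 1) := by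
    refine summable_of_sum_range_le (c := b 0) (fun n => (mul_pos hδ (tpos _)).le) fun n => ?_
    calc ∑ i ∈ Finset.range n, δ * t (i + 1) ≤ ∑ i ∈ Finset.range n, (b i - b (i + 1)) :=
          Finset.sum_le_sum fun i _ => hstep i
      _ = b 0 - b n := Finset.sum_range_sub' b n
      _ ≤ b 0 := by linarith [bpos n]
  have hsum2 : Summable fun n => t (n + 1) := (summable_mul_left_iff hδ.ne').1 hsum1
  have hsum : Summable t := (summable_nat_add_iff 1).1 hsum2
  refine ⟨hsum, ?_⟩
  have hbdd : BddBelow (Set.range b) := ⟨0, by rintro _ ⟨n, rfl⟩; exact (bpos n).le⟩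
  have hlim := tendsto_atTop_ciInf banti hbdd
  set L := ⨅ i, b i with hL
  have hL0 : 0 ≤ L := le_ciInf fun n => (bpos n).le
  -- a positive limit would make `t` dominate a multiple of the harmonic series
  have hLz : L = 0 := by
    by_contra hne
    have hLp : 0 < L := lt_of_le_of_ne hL0 (Ne.symm hne)
    have hh : Summable fun n : ℕ => L * (1 / ((n + 1 : ℕ) : ℝ)) := by
      refine Summable.of_nonneg_of_le (fun n => by positivity) (fun n => ?_) hsum2
      have : L ≤ b n := ciInf_le hbdd n
      rw [mul_one_div, div_le_iff₀ (by positivity), mul_comm]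
      exact this
    have h2 := (summable_mul_left_iff hLp.ne').1 hh
    exact Real.not_summable_one_div_natCast
      ((summable_nat_add_iff (f := fun n : ℕ => 1 / (n : ℝ)) 1).1 h2)
  rw [hLz] at hlim
  exact (Filter.tendsto_add_atTop_iff_nat (f := fun n : ℕ => (n : ℝ) * t n) 1).1 hlim

/-! ### Acceleration of the series -/

/-- A contiguity relation: passing from the lower parameters `(e, y)` to `(e, y + 1)`. The two
weighted series differ termwise by a telescoping series with null sum. -/
lemma contiguous {a c e y P R S : ℝ} (ha : 0 < a) (ha1 : a < 1) (hc : 0 < c) (hac : a + c ≤ 1)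
    (he : 2 ≤ e) (hy : 1 ≤ y) (hP : 0 ≤ P) (hR : 0 ≤ R)
    (hY : 0 ≤ y ^ 2 - y * (2 * a + c) + (a ^ 2 + 2 * a * c))
    (h : HasSum (fun n : ℕ => (P + R * n) * tt a c e y n) S) :
    HasSum (fun n : ℕ => ((P * y * (y + e - 1 - (2 * a + c)) + R * (a ^ 2 * c)) +
      (P * (y + e - 1 - (2 * a + c)) + R * (y ^ 2 - y * (2 * a + c) + (a ^ 2 + 2 * a * c))) * n) *
        tt a c e (y + 1) n) (S * (y * (y + e - 1 - (2 * a + c)))) := by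
  set g := y + e - 1 - (2 * a + c) with hg
  have hg0 : 0 < g := by linarith
  have he0 : 0 < e := by linarith
  have hy0 : 0 < y := by linarith
  set k : ℕ → ℝ := fun n => tt a c e (y + 1) n * (n * (n + y) * (n + e - 1)) with hk
  have hterm : ∀ n : ℕ, ((P * y * g + R * (a ^ 2 * c)) +
      (P * g + R * (y ^ 2 - y * (2 * a + c) + (a ^ 2 + 2 * a * c))) * n) * tt a c e (y + 1) n =
      (y * g) * ((P + R * n) * tt a c e y n) + R * (k (n + 1) - k n) := by
    intro n
    have h1 := tt_raise (a := a) (c := c) he0 hy0 n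
    have h2 : k (n + 1) = tt a c e (y + 1) n * ((a + n) ^ 2 * (c + n)) := by
      simp only [hk]
      rw [tt_succ]
      push_cast
      have : (e + n : ℝ) ≠ 0 := by positivity
      have : (y + 1 + n : ℝ) ≠ 0 := by positivity
      field_simp
      ring
    have h3 : (y * g) * ((P + R * n) * tt a c e y n) =
        g * (P + R * n) * (y * tt a c e y n) := by ring
    rw [h3, h1, h2]
    simp only [hk, hg]
    ring
  have hk0 : Filter.Tendsto k Filter.atTop (nhds 0) := by
    have hup : Filter.Tendsto (fun n : ℕ => y * (e - 1) * ((n : ℝ) * tt a c 1 1 n)) Filter.atTop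
        (nhds 0) := by
      simpa using (tt_decay ha ha1 hc hac).2.const_mul (y * (e - 1))
    refine squeeze_zero (fun n => ?_) (fun n => ?_) hup
    · have : 0 ≤ (n : ℝ) + e - 1 := by linarith [n.cast_nonneg (α := ℝ)]
      have := tt_pos ha hc he0 (show 0 < y + 1 by linarith) n
      simp only [hk]; positivity
    · have h1 := tt_raise (a := a) (c := c) he0 hy0 n
      have h2 := tt_raise (a := a) (c := c) hy0 (show 0 < e - 1 by linarith) n
      rw [sub_add_cancel, tt_comm a c y e] at h2
      have h3 : k n = y * (e - 1) * (n * tt a c y (e - 1) n) := by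
        simp only [hk]
        have : tt a c e (y + 1) n * (n * (n + y) * (n + e - 1)) =
          n * (n + e - 1) * ((y + n) * tt a c e (y + 1) n) := by ring
        rw [this, ← h1]
        have : n * (n + e - 1) * (y * tt a c e y n) =
          n * y * ((e - 1 + n) * tt a c e y n) := by ring
        rw [this, ← h2]
        ring
      rw [h3]
      have := tt_le_one_one (x := y) (y := e - 1) ha hc hy (by linarith) n
      have : 0 ≤ e - 1 := by linarith
      gcongr
  rw [hasSum_iff_tendsto_nat_of_nonneg]
  · have hs := (h.tendsto_sum_nat.const_mul (y * g)).add (hk0.const_mul R)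
    rw [mul_zero, add_zero, mul_comm (y * g)] at hs
    refine hs.congr fun n => ?_
    simp only [hterm]
    rw [Finset.sum_add_distrib, ← Finset.mul_sum, ← Finset.mul_sum, Finset.sum_range_sub]
    simp [hk]
  · intro n
    have := tt_pos ha hc he0 (show 0 < y + 1 by linarith) n
    positivity

/-- Since `(2)ₙ = (1 + n) (1)ₙ`, the series `₃F₂(a, a, c; 1, 1; 1)` is a weighted series with
lower parameters `(2, 1)`. -/
lemma accel_start {a c : ℝ} (ha : 0 < a) (ha1 : a < 1) (hc : 0 < c) (hac : a + c ≤ 1) :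
    HasSum (fun n : ℕ => (1 + 1 * (n : ℝ)) * tt a c 2 1 n) (∑' n, tt a c 1 1 n) := by
  have h := (tt_decay ha ha1 hc hac).1.hasSum
  refine h.congr_fun fun n => ?_
  have := tt_raise (a := a) (c := c) one_pos one_pos n
  rw [tt_comm a c 2 1, ← one_add_one_eq_two, one_mul, ← this, one_mul]

/-! ### The tail of the accelerated series -/

lemma tt17_step {a c : ℝ} (ha : 0 < a) (ha1 : a < 1) (hc : 0 < c) (hac : a + c ≤ 1) {n : ℕ}
    (hn : 1 ≤ n) :
    tt a c 17 17 (n + 1) ≤ tt a c 17 17 n * ((n + 1) * n / (17 + n) ^ 2) := by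
  have h := ratio_le ha ha1.le hac (show (1 : ℝ) ≤ n by exact_mod_cast hn)
  have ht := tt_pos ha hc (show (0 : ℝ) < 17 by norm_num) (show (0 : ℝ) < 17 by norm_num) n
  rw [tt_succ]
  refine mul_le_mul_of_nonneg_left ?_ ht.le
  have : ((n : ℝ) + 1) * n / (17 + n) ^ 2 =
      (1 + n) ^ 2 * n / ((17 + n) * (17 + n) * (1 + n)) := by
    field_simp
    ring
  rw [this]
  gcongr

lemma tt17_le {a c : ℝ} (ha : 0 < a) (ha1 : a < 1) (hc : 0 < c) (hac : a + c ≤ 1) (n : ℕ) :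
    tt a c 17 17 (n + 1) ≤
      1 / 1156 * ∏ j ∈ Finset.range n, (((j : ℝ) + 2) * (j + 1) / (18 + j) ^ 2) := by
  induction n with
  | zero =>
    have : a ^ 2 * c ≤ 1 / 4 := by
      have : a * c ≤ 1 / 4 := by nlinarith [sq_nonneg (a - c)]
      nlinarith [mul_pos ha hc]
    rw [tt_succ, tt_zero]
    simp
    linarith
  | succ n ih =>
    refine (tt17_step ha ha1 hc hac (Nat.succ_le_succ n.zero_le)).trans ?_
    rw [Finset.prod_range_succ, ← mul_assoc]
    have : (((n + 1 : ℕ) : ℝ) + 1) * ((n + 1 : ℕ) : ℝ) / (17 + ((n + 1 : ℕ) : ℝ)) ^ 2 =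
        ((n : ℝ) + 2) * (n + 1) / (18 + n) ^ 2 := by
      push_cast
      congr 1 <;> ring
    rw [this]
    gcongr

lemma tail_const : 128 * (1 / 1156 *
    ∏ j ∈ Finset.range 31, (((j : ℝ) + 2) * (j + 1) / (18 + j) ^ 2)) ≤ 1 / 2 ^ 82 := by
  simp only [Finset.prod_range_succ, Finset.prod_range_zero]
  norm_num

/-- After the acceleration, the terms from index `32` on are negligible; this is seen by comparing
`(1 + 2n) tₙ` with the differences of the sequence `n² tₙ / 8`. -/
lemma tail_le {a c : ℝ} (ha : 0 < a) (ha1 : a < 1) (hc : 0 < c) (hac : a + c ≤ 1) (m : ℕ) :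
    ∑ n ∈ Finset.Ico 32 (32 + m), (1 + 2 * (n : ℝ)) * tt a c 17 17 n ≤ 1 / 2 ^ 82 := by
  have h17 : (0 : ℝ) < 17 := by norm_num
  have key : ∀ k : ℕ, ∑ n ∈ Finset.Ico 32 (32 + k), (1 + 2 * (n : ℝ)) * tt a c 17 17 n ≤
      128 * tt a c 17 17 32 - ((32 + k : ℕ) : ℝ) ^ 2 * tt a c 17 17 (32 + k) / 8 := by
    intro k
    induction k with
    | zero => norm_num; linarith
    | succ k ih =>
      rw [← add_assoc, Finset.sum_Ico_succ_top (by omega)]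
      have ht := tt_pos ha hc h17 h17 (32 + k)
      have hs := tt17_step ha ha1 hc hac (n := 32 + k) (by omega)
      have hn : (32 : ℝ) ≤ ((32 + k : ℕ) : ℝ) := by push_cast; linarith [k.cast_nonneg (α := ℝ)]
      have hcast : ((32 + k + 1 : ℕ) : ℝ) = ((32 + k : ℕ) : ℝ) + 1 := by push_cast; ring
      rw [hcast]
      generalize ((32 + k : ℕ) : ℝ) = n at *
      generalize tt a c 17 17 (32 + k) = t at *
      generalize tt a c 17 17 (32 + k + 1) = t' at *
      have h1 : (n + 1) ^ 2 * t' ≤ t * (n ^ 2 - 17 * n) := by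
        have h2 : (n + 1) ^ 2 * t' ≤ (n + 1) ^ 2 * (t * ((n + 1) * n / (17 + n) ^ 2)) := by
          gcongr
        refine h2.trans ?_
        have h3 : (n + 1) ^ 2 * (t * ((n + 1) * n / (17 + n) ^ 2)) =
          t * ((n + 1) ^ 3 * n / (17 + n) ^ 2) := by ring
        rw [h3]
        refine mul_le_mul_of_nonneg_left ?_ ht.le
        rw [div_le_iff₀ (by positivity)]
        nlinarith [mul_nonneg (show 0 ≤ n by linarith) (show 0 ≤ n - 32 by linarith),
          mul_nonneg (show 0 ≤ n by linarith) (mul_nonneg (show 0 ≤ n by linarith)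
            (show 0 ≤ n - 32 by linarith))]
      nlinarith [mul_nonneg ht.le (show 0 ≤ n - 8 by linarith)]
  refine (key m).trans ?_
  have h1 := tt17_le ha ha1 hc hac 31
  have h2 := tt_pos ha hc h17 h17 (32 + m)
  have h3 : 0 ≤ ((32 + m : ℕ) : ℝ) ^ 2 * tt a c 17 17 (32 + m) / 8 := by positivity
  have h4 : 128 * tt a c 17 17 32 ≤ 1 / 2 ^ 82 :=
    (mul_le_mul_of_nonneg_left h1 (by norm_num)).trans tail_const
  linarith

/-- Truncating the accelerated series after 32 terms costs a relative error `2 ^ (-82)`. -/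
lemma log_trunc {a c P R S : ℝ} (ha : 0 < a) (ha1 : a < 1) (hc : 0 < c) (hac : a + c ≤ 1)
    (hP : 0 < P) (hR : 0 ≤ R) (hPR : R ≤ 2 * P)
    (h : HasSum (fun n : ℕ => (P + R * n) * tt a c 17 17 n) S) :
    0 < ∑ n ∈ Finset.range 32, (P + R * n) * tt a c 17 17 n ∧
    ∑ n ∈ Finset.range 32, (P + R * n) * tt a c 17 17 n ≤ S ∧
    S ≤ (∑ n ∈ Finset.range 32, (P + R * n) * tt a c 17 17 n) * (1 + 1 / 2 ^ 82) := by
  have h17 : (0 : ℝ) < 17 := by norm_num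
  have tp := fun n => tt_pos ha hc h17 h17 n
  have hpos : ∀ n : ℕ, 0 ≤ (P + R * n) * tt a c 17 17 n := fun n => by
    have := tp n
    positivity
  have hge : P ≤ ∑ n ∈ Finset.range 32, (P + R * n) * tt a c 17 17 n := by
    have := Finset.single_le_sum (s := Finset.range 32) (fun i _ => hpos i)
      (show 0 ∈ Finset.range 32 by simp)
    simpa [tt_zero] using this
  refine ⟨hP.trans_le hge, sum_le_hasSum _ (fun i _ => hpos i) h, ?_⟩
  refine le_of_tendsto' ((Filter.tendsto_add_atTop_iff_nat 32).2 h.tendsto_sum_nat) fun m => ?_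
  rw [add_comm m, ← Finset.sum_range_add_sum_Ico _ (Nat.le_add_right 32 m), mul_add, mul_one]
  gcongr
  have h1 : ∑ n ∈ Finset.Ico 32 (32 + m), (P + R * n) * tt a c 17 17 n ≤
      P * ∑ n ∈ Finset.Ico 32 (32 + m), (1 + 2 * (n : ℝ)) * tt a c 17 17 n := by
    rw [Finset.mul_sum]
    refine Finset.sum_le_sum fun n _ => ?_
    rw [← mul_assoc]
    refine mul_le_mul_of_nonneg_right ?_ (tp n).le
    nlinarith [mul_le_mul_of_nonneg_right hPR (n.cast_nonneg (α := ℝ))]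
  refine h1.trans ?_
  exact mul_le_mul hge (tail_le ha ha1 hc hac m) (Finset.sum_nonneg fun n _ => by
    have := tp n
    positivity) (hP.le.trans hge)

/-! ### Integer arithmetic for the numerical evaluation

The definitions are written with recursors and the functions `Nat.add`, `Nat.mul`, … so that kernel
evaluation does not have to unfold type class instances or compiled matches. -/

/-- Evaluation of a polynomial at `i / N` by Horner's scheme, rounding down after each division. -/
noncomputable def hornerR (N i : ℕ) (l : List ℕ) : ℕ :=
  List.rec (motive := fun _ => ℕ) 0
    (fun c _ ih => Nat.add c (Nat.div (Nat.mul ih i) N)) l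

/-- The product `x (x + N) ⋯ (x + (n - 1) N)`. -/
noncomputable def prodG (N n : ℕ) : ℕ → ℕ :=
  Nat.rec (motive := fun _ => ℕ → ℕ) (fun _ => 1)
    (fun _ ih x => Nat.mul x (ih (Nat.add x N))) n

/-- An integer close to `2 ^ 110 * Γ(i / N)`; the numerical constant is `11! = Γ(12)`. -/
noncomputable def gam (N i : ℕ) : ℕ :=
  Nat.div (Nat.mul (Nat.mul 39916800 (Nat.pow N 12)) (hornerR N i coefR)) (prodG N 12 i)

/-- Application `f b`, written so that kernel reduction evaluates the argument first. -/
noncomputable def force (b : ℕ) (f : ℕ → ℕ) : ℕ :=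
  Nat.rec (motive := fun _ => ℕ) (f 0) (fun n _ => f (Nat.succ n)) b

/-- The product of the denominators `N³ (17 + n)² (1 + n)` over `31 - r ≤ n < 31`. -/
noncomputable def denE (N r : ℕ) : ℕ :=
  Nat.rec (motive := fun _ => ℕ) 1
    (fun r ih => Nat.mul (Nat.mul (Nat.pow N 3)
      (Nat.mul (Nat.pow (Nat.sub 47 r) 2) (Nat.sub 31 r))) ih) r

/-- The last `r + 1` of the 32 terms of the accelerated series, over the common denominator
`denE N r`, by Horner's scheme. -/
noncomputable def ser (N NR r : ℕ) : ℕ → ℕ → ℕ → ℕ :=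
  Nat.rec (motive := fun _ => ℕ → ℕ → ℕ → ℕ) (fun _ _ p => p)
    (fun r ih x y p => Nat.add (Nat.mul p (denE N (Nat.succ r)))
      (Nat.mul (Nat.mul (Nat.mul x x) y) (ih (Nat.add x N) (Nat.add y N) (Nat.add p NR)))) r

/-- One contiguity step on integer data; `PG` stands for `P * G`, and `k` receives the new `P`,
`R`, `D` and the next `G`. -/
noncomputable def half (N A Y z R D G : ℕ) (k : ℕ → ℕ → ℕ → ℕ → ℕ) (PG : ℕ) : ℕ :=
  k (Nat.add (Nat.mul PG z) (Nat.mul R A)) (Nat.add PG (Nat.mul R Y)) (Nat.mul D G) (Nat.add G N)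

/-- `n` double contiguity steps; the result is passed to `k`. -/
noncomputable def mat (N A s t : ℕ) (k : ℕ → ℕ → ℕ → ℕ) (n : ℕ) : ℕ → ℕ → ℕ → ℕ → ℕ → ℕ :=
  Nat.rec (motive := fun _ => ℕ → ℕ → ℕ → ℕ → ℕ → ℕ) (fun P R D _ _ => k P R D)
    (fun _ ih P R D G z =>
      (fun Y => half N A Y z R D G (fun P R D G => half N A Y z R D G
        (fun P R D G => ih P R D G (Nat.add z N)) (Nat.mul P G)) (Nat.mul P G))
      (Nat.sub (Nat.add (Nat.mul z z) t) (Nat.mul z s))) n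

/-- The rounded quotient giving one summand, from the data of the accelerated series with lower
parameters `(17, 17)`; the numerical constant is `16! ^ 2`. -/
noncomputable def finI (N h b c P R D : ℕ) : ℕ :=
  Nat.div
    (Nat.mul (Nat.mul (Nat.pow (Nat.mul (gam N (Nat.sub N b)) (gam N (Nat.sub N c))) 2)
      (ser N (Nat.mul N R) 31 h c P)) (Nat.pow 2 100))
    (Nat.mul (Nat.mul (Nat.pow (gam N b) 2) (Nat.pow 2 220))
      (Nat.mul D (Nat.mul (denE N 31) (Nat.mul 437763136697395052544000000 (Nat.pow N 32)))))

/-- An integer close to `2 ^ 100` times the summand of index `h`, where `b = ⟨hm⟩` and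
`c = ⟨hm²⟩`. -/
noncomputable def termI (N h b c : ℕ) : ℕ :=
  (fun A s t => (fun G => mat N A s t (finI N h b c) 15
      (Nat.add (Nat.mul (Nat.mul N G) N) A)
      (Nat.add (Nat.mul N G) (Nat.sub (Nat.add (Nat.mul N N) t) (Nat.mul N s)))
      G (Nat.add G N) (Nat.mul 2 N))
    (Nat.sub (Nat.mul 2 N) s))
  (Nat.mul (Nat.mul h h) c) (Nat.add (Nat.mul 2 h) c) (Nat.mul h (Nat.add h (Nat.mul 2 c)))

/-- The sum of the approximate summands over `1 ≤ h ≤ n`. -/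
noncomputable def summ (N m n : ℕ) : ℕ :=
  Nat.rec (motive := fun _ => ℕ) 0 (fun h ih =>
    force (Nat.mod (Nat.mul (Nat.succ h) m) N) (fun b => force (Nat.mod (Nat.mul b m) N) (fun c =>
      Nat.add ih (Bool.rec 0 (termI N (Nat.succ h) b c)
        (Nat.beq (Nat.add (Nat.add (Nat.succ h) b) c) N))))) n

/-- Given `S` close to `2 ^ 100` times the sum, with error at most `E`, the interval
`2 N⁶ (S ± E) / 2 ^ 100` contains no integer. -/
noncomputable def checkSE (N S E : ℕ) : Bool :=
  (Nat.ble E S).and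
  (((Nat.div (Nat.mul (Nat.mul 2 (Nat.pow N 6)) (Nat.sub S E)) (Nat.pow 2 100)).beq
    (Nat.div (Nat.mul (Nat.mul 2 (Nat.pow N 6)) (Nat.add S E)) (Nat.pow 2 100))).and
  (Nat.ble 1 (Nat.mod (Nat.mul (Nat.mul 2 (Nat.pow N 6)) (Nat.sub S E)) (Nat.pow 2 100))))

/-- The numerical verification for the modulus `N` and the residue `m`. -/
noncomputable def check (N m : ℕ) : Bool :=
  Nat.rec (motive := fun _ => Bool) false
    (fun S _ => checkSE N (Nat.succ S) (Nat.add (Nat.succ N) (Nat.div (Nat.succ S) (Nat.pow 2 79))))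
    (summ N m (Nat.sub N 1))

/-! ### Correctness of the accelerated series -/

/-- The relation `contiguous` for the upper parameters `h / N` and `c / N`, denominators cleared. -/
lemma half_step {N h c e y G Y P R : ℕ} {S : ℝ} (hh : 0 < h) (hc : 0 < c) (hN : h + c < N)
    (he : 2 ≤ e) (hy : 1 ≤ y) (hG : G + (2 * h + c) + N = (y + e) * N)
    (hY : Y + y * N * (2 * h + c) = y * N * (y * N) + h * (h + 2 * c))
    (H : HasSum (fun n : ℕ => ((P : ℝ) + (N * R : ℝ) * n) * tt (h / N) (c / N) e y n) S) :
    HasSum (fun n : ℕ => (((P * G * (y * N) + R * (h * h * c) : ℕ) : ℝ) +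
      ((N : ℝ) * (P * G + R * Y : ℕ)) * n) * tt (h / N) (c / N) e (y + 1 : ℕ) n)
      (S * (y * N * G)) := by
  have hN0 : (0 : ℝ) < N := by exact_mod_cast (show 0 < N by omega)
  have hh0 : (0 : ℝ) < h := by exact_mod_cast hh
  have hc0 : (0 : ℝ) < c := by exact_mod_cast hc
  have hNr : (h : ℝ) + c < N := by exact_mod_cast hN
  have hGr : (G : ℝ) = (y + e) * N - N - (2 * h + c) := by
    have : (G : ℝ) + (2 * h + c) + N = (y + e) * N := by exact_mod_cast hG
    linarith
  have hYr : (Y : ℝ) = y * N * (y * N) + h * (h + 2 * c) - y * N * (2 * h + c) := by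
    have : (Y : ℝ) + y * N * (2 * h + c) = y * N * (y * N) + h * (h + 2 * c) := by
      exact_mod_cast hY
    linarith
  have hYe : (Y : ℝ) / N ^ 2 = (y : ℝ) ^ 2 - y * (2 * (h / N) + c / N) +
      ((h / N) ^ 2 + 2 * (h / N) * (c / N)) := by
    rw [hYr]; field_simp; ring
  have key := contiguous (a := (h : ℝ) / N) (c := (c : ℝ) / N) (e := e) (y := y) (P := P)
    (R := N * R) (S := S) (by positivity) (by rw [div_lt_one hN0]; linarith) (by positivity)
    (by rw [← add_div, div_le_one hN0]; linarith) (by exact_mod_cast he) (by exact_mod_cast hy)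
    (by positivity) (by positivity) (by rw [← hYe]; positivity) H
  have key2 := key.mul_right ((N : ℝ) ^ 2)
  have e1 : S * (y * N * G) =
      S * (y * ((y : ℝ) + e - 1 - (2 * (h / N) + c / N))) * (N : ℝ) ^ 2 := by
    rw [hGr]
    field_simp
  rw [e1]
  refine key2.congr_fun fun n => ?_
  push_cast
  rw [mul_right_comm _ _ ((N : ℝ) ^ 2)]
  congr 1
  rw [hGr, hYr]
  field_simp
  ring

/-- The state of the acceleration after reaching the lower parameters `(y, y)`: the value `F`, up
to an explicit integer factor, is the series with weights `P + N R n`. The bound `N R ≤ 2 P` controls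
the tail of that series. -/
def AccInv (N h c : ℕ) (F : ℝ) (y P R D : ℕ) : Prop :=
  0 < P ∧ 0 < D ∧ N * R ≤ 2 * P ∧
    HasSum (fun n : ℕ => ((P : ℝ) + (N * R : ℝ) * n) * tt (h / N) (c / N) y y n)
      (F * (D * N ^ (2 * (y - 1)) * ((y - 1).factorial : ℝ) ^ 2))

lemma sub_ok {N h c y : ℕ} (hN : h + c < N) (hy : 1 ≤ y) :
    y * N * (2 * h + c) ≤ y * N * (y * N) + h * (h + 2 * c) := by
  have h1 : N ≤ y * N := Nat.le_mul_of_pos_left N hy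
  generalize y * N = z at *
  zify at *
  nlinarith [mul_nonneg (show (0 : ℤ) ≤ z - h by linarith [c.cast_nonneg (α := ℤ)])
    (show (0 : ℤ) ≤ z - h - c by linarith), mul_nonneg (c.cast_nonneg (α := ℤ))
    (h.cast_nonneg (α := ℤ))]

/-- The bound `N R ≤ 2 P` is preserved by a contiguity step. -/
lemma ratio_step {N h c e y G Y P R : ℕ} (hN : h + c < N)
    (hy : 2 ≤ y) (he : e = y ∨ e = y + 1) (hG : G + (2 * h + c) + N = (y + e) * N)
    (hY : Y + y * N * (2 * h + c) = y * N * (y * N) + h * (h + 2 * c)) (H : N * R ≤ 2 * P) :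
    N * (P * G + R * Y) ≤ 2 * (P * G * (y * N) + R * (h * h * c)) := by
  have k1 : N * G + 2 * Y ≤ 2 * G * (y * N) := by
    zify at *
    have hh := h.cast_nonneg (α := ℤ)
    have hc := c.cast_nonneg (α := ℤ)
    have hG' : (G : ℤ) = (y + e) * N - N - (2 * h + c) := by linarith
    have hY' : (Y : ℤ) = y * N * (y * N) + h * (h + 2 * c) - y * N * (2 * h + c) := by linarith
    have h2 : (2 * (h * (h + 2 * c)) : ℤ) ≤ N * N + N * (2 * h + c) := by
      nlinarith [mul_nonneg hh hc]
    have hy2 : (0 : ℤ) ≤ (y - 2) * (N * N) := by nlinarith [mul_self_nonneg (N : ℤ)]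
    have hy3 : (0 : ℤ) ≤ y * ((y - 2) * (N * N)) := by positivity
    rcases he with he | he
    · rw [hG', hY', he]
      nlinarith
    · rw [hG', hY', he]
      nlinarith
  calc N * (P * G + R * Y) = P * (N * G) + (N * R) * Y := by ring
    _ ≤ P * (N * G) + (2 * P) * Y := by gcongr
    _ = P * (N * G + 2 * Y) := by ring
    _ ≤ P * (2 * G * (y * N)) := by gcongr
    _ ≤ _ := by nlinarith [Nat.zero_le (R * (h * h * c))]

lemma AccInv_step {N h c y G P R D : ℕ} {F : ℝ} (hh : 0 < h) (hc : 0 < c) (hN : h + c < N)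
    (hy : 2 ≤ y) (hG : G + (2 * h + c) + N = (y + y) * N) (H : AccInv N h c F y P R D)
    {Y P₁ R₁ : ℕ} (hY : Y = y * N * (y * N) + h * (h + 2 * c) - y * N * (2 * h + c))
    (hP₁ : P₁ = P * G * (y * N) + R * (h * h * c)) (hR₁ : R₁ = P * G + R * Y) :
    AccInv N h c F (y + 1) (P₁ * (G + N) * (y * N) + R₁ * (h * h * c)) (P₁ * (G + N) + R₁ * Y)
      (D * G * (G + N)) := by
  obtain ⟨hP, hD, hR, hS⟩ := H
  have hY' : Y + y * N * (2 * h + c) = y * N * (y * N) + h * (h + 2 * c) := by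
    have := sub_ok (y := y) hN (by omega)
    omega
  have hG0 : 0 < G := by
    have : 2 * N + 2 * N ≤ (y + y) * N := by nlinarith
    omega
  have hN0 : 0 < N := by omega
  have hG' : (G + N) + (2 * h + c) + N = (y + (y + 1)) * N := by linarith
  have s1 := half_step hh hc hN hy (by omega) hG hY' hS
  rw [← hP₁, ← hR₁] at s1
  have r1 := ratio_step hN hy (Or.inl rfl) hG hY' hR
  rw [← hP₁, ← hR₁] at r1
  have s2 := half_step (e := y + 1) hh hc hN (by omega) (by omega : 1 ≤ y) hG' hY' (by
    refine s1.congr_fun fun n => ?_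
    rw [tt_comm])
  have r2 := ratio_step hN hy (Or.inr rfl) hG' hY' r1
  have hP1 : 0 < P₁ := by rw [hP₁]; positivity
  refine ⟨by positivity, by positivity, r2, ?_⟩
  have e1 : F * (((D * G * (G + N) : ℕ) : ℝ) * N ^ (2 * (y + 1 - 1)) *
      ((y + 1 - 1).factorial : ℝ) ^ 2) =
      F * (D * N ^ (2 * (y - 1)) * ((y - 1).factorial : ℝ) ^ 2) * (y * N * G) *
        (y * N * (G + N : ℕ)) := by
    obtain ⟨w, rfl⟩ : ∃ w, y = w + 1 := ⟨y - 1, by omega⟩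
    rw [Nat.add_sub_cancel, Nat.add_sub_cancel, Nat.factorial_succ]
    push_cast
    ring
  rw [e1]
  exact s2

lemma mat_succ (N A s t : ℕ) (k : ℕ → ℕ → ℕ → ℕ) (n P R D G z : ℕ) :
    mat N A s t k (n + 1) P R D G z =
      (fun Y => (fun P₁ R₁ => mat N A s t k n (P₁ * (G + N) * z + R₁ * A)
        (P₁ * (G + N) + R₁ * Y) (D * G * (G + N)) (G + N + N) (z + N))
        (P * G * z + R * A) (P * G + R * Y)) (z * z + t - z * s) := rfl

lemma mat_spec {N h c : ℕ} {F : ℝ} (hh : 0 < h) (hc : 0 < c) (hN : h + c < N)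
    (k : ℕ → ℕ → ℕ → ℕ) (n : ℕ) : ∀ {y G P R D : ℕ}, 2 ≤ y →
    G + (2 * h + c) + N = (y + y) * N → AccInv N h c F y P R D →
    ∃ P' R' D', mat N (h * h * c) (2 * h + c) (h * (h + 2 * c)) k n P R D G (y * N) = k P' R' D' ∧
      AccInv N h c F (y + n) P' R' D' := by
  induction n with
  | zero => intro y G P R D _ _ H; exact ⟨P, R, D, rfl, H⟩
  | succ n ih =>
    intro y G P R D hy hG H
    have h1 := AccInv_step hh hc hN hy hG H rfl rfl rfl
    obtain ⟨P', R', D', e, H'⟩ := ih (G := G + N + N) (by omega) (by linarith) h1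
    refine ⟨P', R', D', ?_, ?_⟩
    · rw [mat_succ, show y * N + N = (y + 1) * N by ring]
      exact e
    · rwa [show y + (n + 1) = y + 1 + n by ring]

lemma AccInv_start {N h c G : ℕ} (hh : 0 < h) (hc : 0 < c) (hN : h + c < N)
    (hG : G + (2 * h + c) = 2 * N) :
    AccInv N h c (∑' n, tt (h / N) (c / N) 1 1 n) 2 (N * G * N + h * h * c)
      (N * G + (N * N + h * (h + 2 * c) - N * (2 * h + c))) G := by
  have hN0 : (0 : ℝ) < N := by exact_mod_cast (show 0 < N by omega)
  have hNn : 0 < N := by omega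
  have hh0 : (0 : ℝ) < h := by exact_mod_cast hh
  have hc0 : (0 : ℝ) < c := by exact_mod_cast hc
  have hNr : (h : ℝ) + c < N := by exact_mod_cast hN
  have hY := sub_ok (y := 1) hN le_rfl
  rw [one_mul] at hY
  obtain ⟨Y, hY'⟩ : ∃ Y, Y = N * N + h * (h + 2 * c) - N * (2 * h + c) := ⟨_, rfl⟩
  have hYe : Y + N * (2 * h + c) = N * N + h * (h + 2 * c) := by omega
  rw [← hY']
  have hG0 : 0 < G := by omega
  have s0 := (accel_start (a := (h : ℝ) / N) (c := (c : ℝ) / N) (by positivity)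
    (by rw [div_lt_one hN0]; linarith) (by positivity)
    (by rw [← add_div, div_le_one hN0]; linarith)).mul_left (N : ℝ)
  have s1 := half_step (P := N) (R := 1) (e := 2) (y := 1) (G := G) (Y := Y) hh hc hN le_rfl le_rfl
    (by linarith) (by linarith) (by
      refine s0.congr_fun fun n => ?_
      push_cast
      ring)
  refine ⟨by positivity, hG0, ?_, ?_⟩
  · have : h * (h + 2 * c) ≤ N * N := by nlinarith
    have : Y ≤ N * G := by nlinarith
    nlinarith [Nat.zero_le (h * h * c)]
  · have e1 : (∑' n, tt (h / N) (c / N) 1 1 n) *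
        ((G : ℝ) * N ^ (2 * (2 - 1)) * ((2 - 1).factorial : ℝ) ^ 2) =
        N * (∑' n, tt (h / N) (c / N) 1 1 n) * ((1 : ℕ) * N * G) := by
      simp
      ring
    rw [e1]
    refine s1.congr_fun fun n => ?_
    push_cast
    norm_num

/-! ### Correctness of the approximate Gamma values -/

lemma natdiv_real (a b : ℕ) : ((a / b : ℕ) : ℝ) ≤ (a : ℝ) / b ∧ (a : ℝ) / b < (a / b : ℕ) + 1 := by
  rw [← Nat.floor_div_eq_div (K := ℝ)]
  exact ⟨Nat.floor_le (by positivity), Nat.lt_floor_add_one _⟩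

lemma hornerR_spec {N i : ℕ} (hN : 0 < N) (hi : i ≤ N) (l : List ℕ) :
    (hornerR N i l : ℝ) ≤ ev (l.map Int.ofNat) (i / N) ∧
      ev (l.map Int.ofNat) (i / N) ≤ hornerR N i l + l.length := by
  have hN0 : (0 : ℝ) < N := by exact_mod_cast hN
  have hx : (0 : ℝ) ≤ i / N := by positivity
  have hx1 : (i : ℝ) / N ≤ 1 := by
    rw [div_le_one hN0]
    exact_mod_cast hi
  induction l with
  | nil => simp [hornerR, ev]
  | cons c l ih =>
    have e : hornerR N i (c :: l) = c + hornerR N i l * i / N := rfl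
    obtain ⟨h1, h2⟩ := natdiv_real (hornerR N i l * i) N
    push_cast [mul_div_assoc] at h1 h2
    rw [e, List.map_cons, ev, List.length_cons]
    push_cast
    have h3 := mul_le_mul_of_nonneg_right ih.1 hx
    have h4 := mul_le_mul_of_nonneg_right ih.2 hx
    have h5 : (l.length : ℝ) * (i / N) ≤ l.length := mul_le_of_le_one_right (by positivity) hx1
    simp only [Int.ofNat_eq_natCast, Int.cast_natCast]
    constructor <;> nlinarith

lemma prodG_spec {N : ℕ} (hN : 0 < N) (n : ℕ) : ∀ x : ℕ, 0 < x →
    (prodG N n x : ℝ) * Real.Gamma (x / N) = N ^ n * Real.Gamma (x / N + n) := by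
  have hN0 : (0 : ℝ) < N := by exact_mod_cast hN
  induction n with
  | zero => intro x _; simp [prodG]
  | succ n ih =>
    intro x hx
    have hx0 : (0 : ℝ) < x := by exact_mod_cast hx
    have e : prodG N (n + 1) x = x * prodG N n (x + N) := rfl
    have h1 := ih (x + N) (by omega)
    have e2 : ((x + N : ℕ) : ℝ) / N = x / N + 1 := by
      push_cast
      field_simp
    rw [e2, Real.Gamma_add_one (by positivity)] at h1
    rw [e]
    push_cast
    rw [show (x : ℝ) / N + (n + 1) = x / N + 1 + n by ring, pow_succ, mul_right_comm _ (N : ℝ),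
      ← h1]
    field_simp

lemma prodG_le {N : ℕ} (n : ℕ) : ∀ x k : ℕ, x ≤ k * N →
    prodG N n x ≤ N ^ n * k.ascFactorial n := by
  induction n with
  | zero => intro x k _; simp [prodG]
  | succ n ih =>
    intro x k hx
    have e : prodG N (n + 1) x = x * prodG N n (x + N) := rfl
    have h1 := ih (x + N) (k + 1) (by linarith)
    rw [e, Nat.ascFactorial_succ, ← Nat.succ_ascFactorial]
    calc x * prodG N n (x + N) ≤ (k * N) * (N ^ n * (k + 1).ascFactorial n) := by gcongr
      _ = _ := by rw [Nat.succ_eq_add_one]; ring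

lemma prodG_pos {N : ℕ} (n : ℕ) : ∀ x : ℕ, 0 < x → 0 < prodG N n x := by
  induction n with
  | zero => intro x _; exact Nat.one_pos
  | succ n ih => intro x hx; exact Nat.mul_pos hx (ih (x + N) (by omega))

lemma log_one_sub {d q : ℝ} (hd : 0 ≤ d) (hq : 0 < q) (h : 2 * d ≤ q) :
    Real.log q - 2 * (d / q) ≤ Real.log (q - d) := by
  have h1 := Real.one_sub_inv_le_log_of_pos (show 0 < (q - d) / q by
    apply div_pos _ hq; linarith)
  rw [Real.log_div (by linarith) hq.ne', inv_div] at h1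
  have h2 : q / (q - d) ≤ 1 + 2 * (d / q) := by
    rw [div_le_iff₀ (by linarith)]
    have : d / q * d ≤ d / 2 := by
      rw [div_mul_eq_mul_div, div_le_iff₀ hq]
      nlinarith
    have e : (1 + 2 * (d / q)) * (q - d) = q - d + 2 * (d / q * q) - 2 * (d / q * d) := by ring
    rw [e, div_mul_cancel₀ _ hq.ne']
    linarith
  linarith

/-- The integer `gam N i` approximates `2 ^ 110 * Γ(i / N)`; here `12` applications of the functional
equation lead from `12 + i / N` back to `i / N`. -/
lemma gam_spec {N i : ℕ} (hi : 0 < i) (hiN : i < N) : 0 < gam N i ∧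
    |Real.log (gam N i) - (Real.log (2 ^ 110) + Real.log (Real.Gamma (i / N)))| ≤ 1 / 2 ^ 86 := by
  have hN : 0 < N := by omega
  have hN0 : (0 : ℝ) < N := by exact_mod_cast hN
  have hi0 : (0 : ℝ) < i := by exact_mod_cast hi
  have hx : (0 : ℝ) ≤ i / N := by positivity
  have hx1 : (i : ℝ) / N ≤ 1 := by
    rw [div_le_one hN0]
    exact_mod_cast hiN.le
  obtain ⟨H1, H2⟩ := hornerR_spec hN hiN.le coefR
  have hp := polyR_ge hx
  have hc := log_Gamma_close hx hx1
  have hlen : (coefR.length : ℝ) ≤ 64 := by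
    have : coefR.length ≤ 64 := by decide
    exact_mod_cast this
  have eR : ev (coefR.map Int.ofNat) (i / N) = polyR (i / N) := rfl
  rw [eR] at H1 H2
  set H := hornerR N i coefR with hH
  set p := polyR (i / N) with hpdef
  have hG := prodG_spec hN 12 i hi
  have hGp := prodG_pos (N := N) 12 i hi
  have hGle := prodG_le (N := N) 12 i 1 (by omega)
  set Pg := prodG N 12 i with hPg
  have hPg0 : (0 : ℝ) < Pg := by exact_mod_cast hGp
  have hPle : (Pg : ℝ) ≤ N ^ 12 * 479001600 := by
    have : (1 : ℕ).ascFactorial 12 = 479001600 := by decide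
    rw [this] at hGle
    exact_mod_cast hGle
  have hΓ : 0 < Real.Gamma (i / N) := Real.Gamma_pos_of_pos (by positivity)
  have hΓ12 : 0 < Real.Gamma (12 + i / N) := Real.Gamma_pos_of_pos (by positivity)
  have hHlow : p - 64 ≤ H := by linarith
  have hH0 : (2 : ℝ) ^ 109 ≤ H := by
    have : (2 : ℝ) ^ 109 ≤ 2 ^ 110 - 64 := by norm_num
    linarith
  have hHp : (0 : ℝ) < H := lt_of_lt_of_le (by positivity) hH0
  have hp0 : 0 < p := lt_of_lt_of_le (by positivity) hp
  have e : gam N i = 39916800 * N ^ 12 * H / Pg := rfl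
  obtain ⟨d1, d2⟩ := natdiv_real (39916800 * N ^ 12 * H) Pg
  rw [← e] at d1 d2
  push_cast at d1 d2
  set Q : ℝ := 39916800 * N ^ 12 * H / Pg with hQ
  have hQlow : (2 : ℝ) ^ 105 ≤ Q := by
    rw [hQ, le_div_iff₀ hPg0]
    calc (2 : ℝ) ^ 105 * Pg ≤ 2 ^ 105 * ((N : ℝ) ^ 12 * 479001600) := by gcongr
      _ = (N : ℝ) ^ 12 * (39916800 * (2 ^ 105 * 12)) := by ring
      _ ≤ (N : ℝ) ^ 12 * (39916800 * 2 ^ 109) := by gcongr; norm_num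
      _ ≤ (N : ℝ) ^ 12 * (39916800 * H) := by gcongr
      _ = _ := by ring
  have hQ0 : 0 < Q := lt_of_lt_of_le (by positivity) hQlow
  have hg0 : Q - 1 ≤ gam N i := by linarith
  have hQ1 : 0 < Q - 1 := by
    have : (1 : ℝ) < 2 ^ 105 := by norm_num
    linarith
  have hgp : (0 : ℝ) < gam N i := by linarith
  refine ⟨by exact_mod_cast hgp, ?_⟩
  have hQe : Q = 39916800 * H * Real.Gamma (i / N) / Real.Gamma (12 + i / N) := by
    rw [hQ, div_eq_div_iff hPg0.ne' hΓ12.ne', add_comm (12 : ℝ)]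
    push_cast at hG
    calc _ = 39916800 * H * ((N : ℝ) ^ 12 * Real.Gamma (i / N + 12)) := by ring
      _ = _ := by rw [← hG]; ring
  have hlogQ : Real.log Q = Real.log 39916800 + Real.log H + Real.log (Real.Gamma (i / N)) -
      Real.log (Real.Gamma (12 + i / N)) := by
    rw [hQe, Real.log_div (by positivity) hΓ12.ne', Real.log_mul (by positivity) hΓ.ne',
      Real.log_mul (by norm_num) hHp.ne']
  rw [Real.log_div (by norm_num) (by positivity)] at hc
  have g1 : Real.log (gam N i) ≤ Real.log Q := Real.log_le_log hgp d1
  have g2 : Real.log Q - 1 / 2 ^ 104 ≤ Real.log (gam N i) := by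
    refine le_trans ?_ (Real.log_le_log hQ1 hg0)
    refine le_trans ?_ (log_one_sub zero_le_one hQ0 (le_trans (by norm_num) hQlow))
    have : 1 / Q ≤ 1 / 2 ^ 105 := by gcongr
    linarith
  have q1 : Real.log H ≤ Real.log p := Real.log_le_log hHp H1
  have q2 : Real.log p - 1 / 2 ^ 103 ≤ Real.log H := by
    have h128 : (128 : ℝ) ≤ 2 ^ 110 := by norm_num
    refine le_trans ?_ (Real.log_le_log (by linarith) hHlow)
    refine le_trans ?_ (log_one_sub (by norm_num) hp0 (by linarith))
    have : 64 / p ≤ 64 / 2 ^ 110 := by gcongr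
    linarith
  rw [abs_le] at hc ⊢
  constructor <;> linarith

/-! ### Correctness of the approximate summands -/

lemma denE_pos {N : ℕ} (hN : 0 < N) (r : ℕ) (hr : r ≤ 31) : 0 < denE N r := by
  induction r with
  | zero => exact Nat.one_pos
  | succ r ih =>
    have h1 := ih (by omega)
    have e : denE N (r + 1) = N ^ 3 * ((47 - r) ^ 2 * (31 - r)) * denE N r := rfl
    rw [e]
    have : 0 < 31 - r := by omega
    have : 0 < 47 - r := by omega
    positivity

lemma ser_spec {N h c P R : ℕ} (hN : 0 < N) (r : ℕ) : ∀ n : ℕ, r + n = 31 →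
    (ser N (N * R) r (h + n * N) (c + n * N) (P + n * (N * R)) : ℝ) *
        tt (h / N) (c / N) 17 17 n =
      denE N r * ∑ k ∈ Finset.Ico n 32, ((P : ℝ) + (N * R : ℝ) * k) *
        tt (h / N) (c / N) 17 17 k := by
  have hN0 : (0 : ℝ) < N := by exact_mod_cast hN
  induction r with
  | zero =>
    intro n hn
    obtain rfl : n = 31 := by omega
    have e : ser N (N * R) 0 (h + 31 * N) (c + 31 * N) (P + 31 * (N * R)) =
      P + 31 * (N * R) := rfl
    have e2 : denE N 0 = 1 := rfl
    rw [e, e2, Nat.Ico_succ_singleton, Finset.sum_singleton]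
    push_cast
    ring
  | succ r ih =>
    intro n hn
    have e : ser N (N * R) (r + 1) (h + n * N) (c + n * N) (P + n * (N * R)) =
      (P + n * (N * R)) * denE N (r + 1) + (h + n * N) * (h + n * N) * (c + n * N) *
        ser N (N * R) r (h + n * N + N) (c + n * N + N) (P + n * (N * R) + N * R) := rfl
    have e2 : denE N (r + 1) = N ^ 3 * ((47 - r) ^ 2 * (31 - r)) * denE N r := rfl
    rw [show 47 - r = 17 + n by omega, show 31 - r = 1 + n by omega] at e2
    have h1 := ih (n + 1) (by omega)
    rw [show h + (n + 1) * N = h + n * N + N by ring, show c + (n + 1) * N = c + n * N + N by ring,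
      show P + (n + 1) * (N * R) = P + n * (N * R) + N * R by ring, tt_succ] at h1
    rw [Finset.sum_eq_sum_Ico_succ_bot (by omega : n < 32), mul_add]
    have h2 : (denE N (r + 1) : ℝ) * ∑ k ∈ Finset.Ico (n + 1) 32,
        ((P : ℝ) + (N * R : ℝ) * k) * tt (h / N) (c / N) 17 17 k =
        (N ^ 3 * ((17 + n) ^ 2 * (1 + n))) * (denE N r * ∑ k ∈ Finset.Ico (n + 1) 32,
        ((P : ℝ) + (N * R : ℝ) * k) * tt (h / N) (c / N) 17 17 k) := by
      rw [e2]
      push_cast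
      ring
    rw [h2, ← h1, e]
    push_cast
    field_simp

lemma close_of_log {Q T d : ℝ} (hQ : 0 < Q) (hT : 0 < T) (hd : 0 ≤ d) (hd2 : d ≤ 1 / 2)
    (h : Real.log Q - Real.log T ≤ d) : Q * (1 - d) ≤ T ∧ Q ≤ T * (1 + 2 * d) := by
  have h1 : 1 - d ≤ T / Q := by
    have := Real.log_le_sub_one_of_pos (show 0 < T / Q by positivity)
    rw [Real.log_div hT.ne' hQ.ne'] at this
    linarith
  rw [le_div_iff₀ hQ] at h1
  refine ⟨by linarith, ?_⟩
  have : (1 - d) * Q * (1 + 2 * d) ≤ T * (1 + 2 * d) := by gcongr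
  have h2 : 0 ≤ d * (1 - 2 * d) * Q := by
    have : 0 ≤ 1 - 2 * d := by linarith
    positivity
  nlinarith

/-- The summand of index `h`, with `b = ⟨hm⟩` and `c = ⟨hm²⟩`. -/
noncomputable def summand (N h b c : ℕ) : ℝ :=
  (Real.Gamma ((N - b : ℕ) / N) * Real.Gamma ((N - c : ℕ) / N) / Real.Gamma (b / N)) ^ 2 *
    ∑' n, tt (h / N) (c / N) 1 1 n

/-- Error propagation: relative errors of `1 / 2 ^ 86` in the Gamma values and of `1 / 2 ^ 82` in
the series perturb the summand by a relative error of at most `1 / 2 ^ 80`. -/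
lemma quot_close {g₁ g₂ g₃ Γ₁ Γ₂ Γ₃ S W F : ℝ} (p1 : 0 < g₁) (p2 : 0 < g₂) (p3 : 0 < g₃)
    (G1 : 0 < Γ₁) (G2 : 0 < Γ₂) (G3 : 0 < Γ₃)
    (q1 : |Real.log g₁ - (Real.log (2 ^ 110) + Real.log Γ₁)| ≤ 1 / 2 ^ 86)
    (q2 : |Real.log g₂ - (Real.log (2 ^ 110) + Real.log Γ₂)| ≤ 1 / 2 ^ 86)
    (q3 : |Real.log g₃ - (Real.log (2 ^ 110) + Real.log Γ₃)| ≤ 1 / 2 ^ 86)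
    (hS : 0 < S) (hW : 0 < W) (t1 : S ≤ F * W) (t2 : F * W ≤ S * (1 + 1 / 2 ^ 82)) :
    (g₁ * g₂) ^ 2 * S * 2 ^ 100 / (g₃ ^ 2 * (2 ^ 110) ^ 2 * W) * (1 - 1 / 2 ^ 80) ≤
        2 ^ 100 * ((Γ₁ * Γ₂ / Γ₃) ^ 2 * F) ∧
      2 ^ 100 * ((Γ₁ * Γ₂ / Γ₃) ^ 2 * F) ≤
        (g₁ * g₂) ^ 2 * S * 2 ^ 100 / (g₃ ^ 2 * (2 ^ 110) ^ 2 * W) * (1 + 1 / 2 ^ 80) := by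
  have hFW : 0 < F * W := lt_of_lt_of_le hS t1
  have hF : 0 < F := pos_of_mul_pos_left hFW hW.le
  set Q := (g₁ * g₂) ^ 2 * S * 2 ^ 100 / (g₃ ^ 2 * (2 ^ 110) ^ 2 * W) with hQdef
  have hQ0 : 0 < Q := by positivity
  set T : ℝ := 2 ^ 100 * ((Γ₁ * Γ₂ / Γ₃) ^ 2 * F) with hT
  have hT0 : 0 < T := by positivity
  have lQ : Real.log Q = 2 * (Real.log g₁ + Real.log g₂) + Real.log S + Real.log (2 ^ 100) -
      (2 * Real.log g₃ + 2 * Real.log (2 ^ 110) + Real.log W) := by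
    rw [hQdef, Real.log_div (by positivity) (by positivity), Real.log_mul (by positivity)
      (by positivity), Real.log_mul (by positivity) hS.ne', Real.log_pow (g₁ * g₂),
      Real.log_mul p1.ne' p2.ne', Real.log_mul (by positivity) hW.ne',
      Real.log_mul (by positivity) (by positivity), Real.log_pow g₃, Real.log_pow ((2 : ℝ) ^ 110)]
    simp only [Nat.cast_ofNat]
  have lT : Real.log T = Real.log (2 ^ 100) + (2 * (Real.log Γ₁ + Real.log Γ₂ - Real.log Γ₃) +
      Real.log F) := by
    rw [hT, Real.log_mul (by positivity) (by positivity), Real.log_mul (by positivity) hF.ne',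
      Real.log_pow (Γ₁ * Γ₂ / Γ₃), Real.log_div (by positivity) G3.ne', Real.log_mul G1.ne' G2.ne']
    simp only [Nat.cast_ofNat]
  have lS1 := Real.log_le_log hS t1
  have lS2 := Real.log_le_log hFW t2
  rw [Real.log_mul hS.ne' (by positivity)] at lS2
  rw [Real.log_mul hF.ne' hW.ne'] at lS1 lS2
  have lS3 : Real.log (1 + 1 / 2 ^ 82) ≤ 1 / 2 ^ 82 := by
    have := Real.log_le_sub_one_of_pos (show (0 : ℝ) < 1 + 1 / 2 ^ 82 by positivity)
    linarith
  rw [abs_le] at q1 q2 q3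
  have hk : 6 * (1 / 2 ^ 86 : ℝ) + 1 / 2 ^ 82 ≤ 1 / 2 ^ 81 := by norm_num
  have hd1 : Real.log T - Real.log Q ≤ 1 / 2 ^ 81 := by
    rw [lQ, lT]
    linarith only [hk, lS1, lS2, lS3, q1.1, q1.2, q2.1, q2.2, q3.1, q3.2]
  have hd2 : Real.log Q - Real.log T ≤ 1 / 2 ^ 81 := by
    rw [lQ, lT]
    linarith only [hk, lS1, lS2, lS3, q1.1, q1.2, q2.1, q2.2, q3.1, q3.2]
  have c1 := (close_of_log hT0 hQ0 (by positivity) (by norm_num) hd1).2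
  have c2 := (close_of_log hQ0 hT0 (by positivity) (by norm_num) hd2).1
  have e2 : (2 : ℝ) * (1 / 2 ^ 81) = 1 / 2 ^ 80 := by norm_num
  rw [e2] at c1
  refine ⟨le_trans ?_ c2, c1⟩
  gcongr <;> norm_num

lemma quot_simp {g₁ g₂ g₃ E S D N W : ℝ} (hN : 0 < N) (hD : 0 < D) (hg : 0 < g₃) (hE : 0 < E)
    (hW : W = D * N ^ 32 * 437763136697395052544000000) :
    (g₁ * g₂) ^ 2 * (E * S) * 2 ^ 100 / (g₃ ^ 2 * 2 ^ 220 *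
      (D * (E * (437763136697395052544000000 * N ^ 32)))) =
      (g₁ * g₂) ^ 2 * S * 2 ^ 100 / (g₃ ^ 2 * (2 ^ 110) ^ 2 * W) := by
  rw [hW, ← pow_mul 2 110 2]
  norm_num only
  field_simp

lemma finI_close {N h b c P R D : ℕ} {S W : ℝ} (hN : 0 < N) (hD : 0 < D) (hb : 0 < gam N b)
    (hS : (ser N (N * R) 31 h c P : ℝ) = denE N 31 * S)
    (hW : W = D * N ^ 32 * 437763136697395052544000000) :
    (finI N h b c P R D : ℝ) ≤ ((gam N (N - b) : ℝ) * gam N (N - c)) ^ 2 * S * 2 ^ 100 /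
        ((gam N b : ℝ) ^ 2 * (2 ^ 110) ^ 2 * W) ∧
      ((gam N (N - b) : ℝ) * gam N (N - c)) ^ 2 * S * 2 ^ 100 /
        ((gam N b : ℝ) ^ 2 * (2 ^ 110) ^ 2 * W) ≤ finI N h b c P R D + 1 := by
  have hN0 : (0 : ℝ) < N := by exact_mod_cast hN
  have hD0 : (0 : ℝ) < D := by exact_mod_cast hD
  have hb0 : (0 : ℝ) < gam N b := by exact_mod_cast hb
  have hden0 : (0 : ℝ) < denE N 31 := by exact_mod_cast denE_pos hN 31 le_rfl
  have e : finI N h b c P R D = ((gam N (N - b) * gam N (N - c)) ^ 2 * ser N (N * R) 31 h c P *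
    2 ^ 100) / (gam N b ^ 2 * 2 ^ 220 *
      (D * (denE N 31 * (437763136697395052544000000 * N ^ 32)))) := rfl
  have d :=
    natdiv_real ((gam N (N - b) * gam N (N - c)) ^ 2 * ser N (N * R) 31 h c P *
      2 ^ 100) (gam N b ^ 2 * 2 ^ 220 *
        (D * (denE N 31 * (437763136697395052544000000 * N ^ 32))))
  rw [← e] at d
  simp only [Nat.cast_mul, Nat.cast_pow, Nat.cast_ofNat] at d
  rw [hS] at d
  rw [quot_simp hN0 hD0 hb0 hden0 hW] at d
  exact ⟨d.1, d.2.le⟩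

lemma finI_spec {N h b c P R D : ℕ} (hh : 0 < h) (hb : 0 < b) (hc : 0 < c) (hN : h + b + c = N)
    (H : AccInv N h c (∑' n, tt (h / N) (c / N) 1 1 n) 17 P R D) :
    (finI N h b c P R D : ℝ) * (1 - 1 / 2 ^ 80) ≤ 2 ^ 100 * summand N h b c ∧
      2 ^ 100 * summand N h b c ≤ (finI N h b c P R D + 1) * (1 + 1 / 2 ^ 80) := by
  obtain ⟨hP, hD, hR, hS⟩ := H
  have hN1 : 0 < N := by omega
  have hN0 : (0 : ℝ) < N := by exact_mod_cast hN1
  have hh0 : (0 : ℝ) < h := by exact_mod_cast hh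
  have hc0 : (0 : ℝ) < c := by exact_mod_cast hc
  have hb0 : (0 : ℝ) < b := by exact_mod_cast hb
  have hD0 : (0 : ℝ) < D := by exact_mod_cast hD
  have hP0 : (0 : ℝ) < P := by exact_mod_cast hP
  have hNr : (h : ℝ) + b + c = N := by exact_mod_cast hN
  have hRr : (N * R : ℝ) ≤ 2 * P := by exact_mod_cast hR
  push_cast at hS
  obtain ⟨t0, t1, t2⟩ := log_trunc (a := (h : ℝ) / N) (c := (c : ℝ) / N) (by positivity)
    (by rw [div_lt_one hN0]; linarith) (by positivity)
    (by rw [← add_div, div_le_one hN0]; linarith) hP0 (by positivity) hRr hS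
  have s1 := ser_spec (h := h) (c := c) (P := P) (R := R) hN1 31 0 rfl
  rw [zero_mul, zero_mul, add_zero, add_zero, add_zero, tt_zero, mul_one,
    ← Finset.range_eq_Ico] at s1
  have hfac : ((Nat.factorial 16 : ℕ) : ℝ) ^ 2 = 437763136697395052544000000 := by
    norm_num [Nat.factorial]
  rw [hfac] at t1 t2
  have hNb : 0 < N - b := by omega
  have hNc : 0 < N - c := by omega
  have hNb' : N - b < N := by omega
  have hNc' : N - c < N := by omega
  have hbN : b < N := by omega
  have G1 : 0 < Real.Gamma ((N - b : ℕ) / N) := Real.Gamma_pos_of_pos (by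
    have : (0 : ℝ) < (N - b : ℕ) := by exact_mod_cast hNb
    positivity)
  have G2 : 0 < Real.Gamma ((N - c : ℕ) / N) := Real.Gamma_pos_of_pos (by
    have : (0 : ℝ) < (N - c : ℕ) := by exact_mod_cast hNc
    positivity)
  have G3 : 0 < Real.Gamma (b / N) := Real.Gamma_pos_of_pos (by positivity)
  obtain ⟨p1, q1⟩ := gam_spec hNb hNb'
  obtain ⟨p2, q2⟩ := gam_spec hNc hNc'
  obtain ⟨p3, q3⟩ := gam_spec hb hbN
  obtain ⟨d1, d2⟩ := finI_close (b := b) hN1 hD p3 s1 rfl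
  obtain ⟨c1, c2⟩ := quot_close (by exact_mod_cast p1) (by exact_mod_cast p2)
    (by exact_mod_cast p3) G1 G2 G3 q1 q2 q3 t0 (by positivity) t1 t2
  exact ⟨(mul_le_mul_of_nonneg_right d1 (by norm_num)).trans c1,
    c2.trans (mul_le_mul_of_nonneg_right d2 (by positivity))⟩

lemma termI_spec {N h b c : ℕ} (hh : 0 < h) (hb : 0 < b) (hc : 0 < c) (hN : h + b + c = N) :
    (termI N h b c : ℝ) * (1 - 1 / 2 ^ 80) ≤ 2 ^ 100 * summand N h b c ∧
      2 ^ 100 * summand N h b c ≤ (termI N h b c + 1) * (1 + 1 / 2 ^ 80) := by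
  have hG : (2 * N - (2 * h + c)) + (2 * h + c) = 2 * N := by omega
  have h1 := AccInv_start hh hc (show h + c < N by omega) hG
  obtain ⟨P, R, D, e, H⟩ := mat_spec hh hc (show h + c < N by omega) (finI N h b c) 15
    (G := 2 * N - (2 * h + c) + N) le_rfl (by omega) h1
  have e2 : termI N h b c = finI N h b c P R D := e
  rw [e2]
  exact finI_spec hh hb hc hN H

/-! ### From the numerical verification to non-integrality -/

lemma force_eq (b : ℕ) (f : ℕ → ℕ) : force b f = f b := by
  cases b <;> rfl

lemma summ_succ (N m n : ℕ) : summ N m (n + 1) = summ N m n +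
    if n + 1 + (n + 1) * m % N + (n + 1) * m % N * m % N = N then
      termI N (n + 1) ((n + 1) * m % N) ((n + 1) * m % N * m % N) else 0 := by
  have e : summ N m (n + 1) = force ((n + 1) * m % N) (fun b => force (b * m % N) (fun c =>
      summ N m n + Bool.rec 0 (termI N (n + 1) b c) (Nat.beq (n + 1 + b + c) N))) := rfl
  rw [e, force_eq, force_eq]
  congr 1
  split_ifs with h
  · rw [show Nat.beq _ _ = true from Nat.beq_eq.mpr h]
  · rw [Bool.eq_false_iff.mpr (fun h' => h (Nat.beq_eq.mp h'))]

lemma summ_spec {N m : ℕ} (hpos : ∀ h, 0 < h → h < N → 0 < h * m % N) (n : ℕ) (hn : n < N) :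
    (summ N m n : ℝ) * (1 - 1 / 2 ^ 80) ≤ 2 ^ 100 * ∑ h ∈ Finset.Icc 1 n,
        (if h + h * m % N + h * m % N * m % N = N then
          summand N h (h * m % N) (h * m % N * m % N) else 0) ∧
      2 ^ 100 * ∑ h ∈ Finset.Icc 1 n, (if h + h * m % N + h * m % N * m % N = N then
          summand N h (h * m % N) (h * m % N * m % N) else 0) ≤
        (summ N m n + n) * (1 + 1 / 2 ^ 80) := by
  induction n with
  | zero => simp [show summ N m 0 = 0 from rfl]
  | succ n ih =>
    obtain ⟨h1, h2⟩ := ih (by omega)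
    have hb := hpos (n + 1) (by omega) hn
    have hc := hpos ((n + 1) * m % N) hb (Nat.mod_lt _ (by omega))
    rw [Finset.sum_Icc_succ_top (by omega), summ_succ, mul_add]
    split_ifs with hN
    · obtain ⟨t1, t2⟩ := termI_spec (by omega) hb hc hN
      push_cast at *
      constructor <;> linarith
    · push_cast
      have : (0 : ℝ) ≤ 1 / 2 ^ 80 := by positivity
      constructor <;> linarith

/-- A successful `check` excludes every integer value. -/
lemma check_sound {N m : ℕ} (hN : 0 < N) (hN' : N < 1000)
    (hpos : ∀ h, 0 < h → h < N → 0 < h * m % N) (hcheck : check N m = true) (z : ℤ) :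
    (z : ℝ) ≠ 2 * (N : ℝ) ^ 6 * ∑ h ∈ Finset.Icc 1 (N - 1),
        (if h + h * m % N + h * m % N * m % N = N then
          summand N h (h * m % N) (h * m % N * m % N) else 0) := by
  obtain ⟨b1, b2⟩ := summ_spec hpos (N - 1) (by omega)
  have e : check N m = Nat.rec (motive := fun _ => Bool) false
    (fun S _ => checkSE N (S + 1) (N + 1 + (S + 1) / 2 ^ 79)) (summ N m (N - 1)) := rfl
  rw [e] at hcheck
  set T := ∑ h ∈ Finset.Icc 1 (N - 1), (if h + h * m % N + h * m % N * m % N = N then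
          summand N h (h * m % N) (h * m % N * m % N) else 0)
  generalize summ N m (N - 1) = S at *
  cases S with
  | zero => exact absurd hcheck (by simp)
  | succ S =>
    replace hcheck : checkSE N (S + 1) (N + 1 + (S + 1) / 2 ^ 79) = true := hcheck
    generalize S + 1 = S at *
    obtain ⟨d1, d2⟩ := natdiv_real S (2 ^ 79)
    generalize S / 2 ^ 79 = k at *
    have hNr : ((N - 1 : ℕ) : ℝ) = N - 1 := by rw [Nat.cast_sub hN]; simp
    have hN3 : (N : ℝ) < 1000 := by exact_mod_cast hN'
    rw [hNr] at b2
    have e2 : checkSE N S (N + 1 + k) = ((Nat.ble (N + 1 + k) S).and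
      (((2 * N ^ 6 * (S - (N + 1 + k)) / 2 ^ 100).beq (2 * N ^ 6 * (S + (N + 1 + k)) / 2 ^ 100)).and
      (Nat.ble 1 (2 * N ^ 6 * (S - (N + 1 + k)) % 2 ^ 100)))) := rfl
    rw [e2, Bool.and_eq_true, Bool.and_eq_true, Nat.ble_eq, Nat.ble_eq, Nat.beq_eq] at hcheck
    obtain ⟨hle, hq, hr⟩ := hcheck
    push_cast at d2
    have l1 : ((S - (N + 1 + k) : ℕ) : ℝ) ≤ 2 ^ 100 * T := by
      rw [Nat.cast_sub hle]
      push_cast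
      have : (S : ℝ) / 2 ^ 80 = S / 2 ^ 79 / 2 := by ring
      have hS0 : (0 : ℝ) ≤ S / 2 ^ 79 := div_nonneg S.cast_nonneg (by norm_num)
      have hN0 : (0 : ℝ) ≤ N := by positivity
      have e3 : (S : ℝ) * (1 - 1 / 2 ^ 80) = S - S / 2 ^ 80 := by ring
      linarith
    have l2 : 2 ^ 100 * T ≤ ((S + (N + 1 + k) : ℕ) : ℝ) := by
      push_cast
      have : (S : ℝ) / 2 ^ 80 = S / 2 ^ 79 / 2 := by ring
      have hS0 : (0 : ℝ) ≤ S / 2 ^ 79 := div_nonneg S.cast_nonneg (by norm_num)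
      have e3 : ((S : ℝ) + (N - 1)) * (1 + 1 / 2 ^ 80) =
        S + S / 2 ^ 80 + (N - 1) + (N - 1) * (1 / 2 ^ 80) := by ring
      have e4 : ((N : ℝ) - 1) * (1 / 2 ^ 80) ≤ 1 := by
        have : (1 / 2 ^ 80 : ℝ) ≤ 1 / 1000 := by norm_num
        nlinarith [show (0 : ℝ) ≤ 1 / 2 ^ 80 by positivity]
      linarith
    intro hz
    have hA : (0 : ℝ) ≤ 2 * (N : ℝ) ^ 6 := by positivity
    have m1 : ((2 * N ^ 6 * (S - (N + 1 + k)) : ℕ) : ℝ) ≤ z * 2 ^ 100 := by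
      rw [Nat.cast_mul]
      push_cast [hz] at l1 ⊢
      have := mul_le_mul_of_nonneg_left l1 hA
      linarith
    have m2 : z * 2 ^ 100 ≤ ((2 * N ^ 6 * (S + (N + 1 + k)) : ℕ) : ℝ) := by
      rw [Nat.cast_mul]
      push_cast [hz] at l2 ⊢
      have := mul_le_mul_of_nonneg_left l2 hA
      linarith
    generalize 2 * N ^ 6 * (S - (N + 1 + k)) = lo at *
    generalize 2 * N ^ 6 * (S + (N + 1 + k)) = hi at *
    have n1 : (lo : ℤ) ≤ z * 2 ^ 100 := by exact_mod_cast m1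
    have n2 : z * 2 ^ 100 ≤ (hi : ℤ) := by exact_mod_cast m2
    norm_num at n1 n2 hq hr
    omega

/-! ### Reduction of the statement to the table of primes -/

lemma poch_zero {a : ℝ} (ha : 0 < a) : poch a 0 = 1 := by
  simp [poch, (Real.Gamma_pos_of_pos ha).ne']

lemma poch_succ {a : ℝ} (ha : 0 < a) (n : ℕ) : poch a (n + 1) = poch a n * (a + n) := by
  unfold poch
  push_cast
  rw [← add_assoc, Real.Gamma_add_one (by positivity)]
  ring

lemma F32_eq {a c : ℝ} (ha : 0 < a) (hc : 0 < c) : F32 a a c 1 1 = ∑' n, tt a c 1 1 n := by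
  unfold F32
  congr 1
  funext n
  induction n with
  | zero => simp [poch_zero ha, poch_zero hc, poch_zero one_pos, tt_zero]
  | succ n ih =>
    rw [tt_succ, ← ih, poch_succ ha, poch_succ hc, poch_succ one_pos, div_mul_div_comm]
    congr 1 <;> ring

lemma fval_eq {N m₀ : ℕ} {m : ℤ} (hN : 0 < N) (hm : (m₀ : ℤ) = m % N)
    (hpos : ∀ h, 0 < h → h < N → 0 < h * m₀ % N) :
    fval N m = 2 * (N : ℝ) ^ 6 * ∑ h ∈ Finset.Icc 1 (N - 1),
        (if h + h * m₀ % N + h * m₀ % N * m₀ % N = N then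
          summand N h (h * m₀ % N) (h * m₀ % N * m₀ % N) else 0) := by
  have hm' : (m₀ : ℤ) ≡ m [ZMOD N] := by
    rw [hm]
    exact Int.mod_modEq m N
  have r1 : ∀ h : ℕ, rep N ((h : ℤ) * m) = h * m₀ % N := fun h => by
    have : ((h : ℤ) * m) % N = ((h * m₀ % N : ℕ) : ℤ) := by
      push_cast
      exact (hm'.symm.mul_left h)
    rw [rep, this, Int.toNat_natCast]
  have r2 : ∀ h : ℕ, rep N ((h : ℤ) * m ^ 2) = h * m₀ % N * m₀ % N := fun h => by
    have : ((h : ℤ) * m ^ 2) % N = ((h * m₀ % N * m₀ % N : ℕ) : ℤ) := by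
      push_cast
      rw [pow_two, ← mul_assoc]
      exact (((Int.mod_modEq _ _).trans (hm'.mul_left h)).mul hm').symm
    rw [rep, this, Int.toNat_natCast]
  unfold fval
  rw [← Finset.sum_filter]
  congr 1
  refine Finset.sum_congr (by simp only [r1, r2]) fun h hh => ?_
  rw [Finset.mem_filter, Finset.mem_Icc] at hh
  have hb := hpos h (by omega) (by omega)
  have hc := hpos _ hb (Nat.mod_lt _ hN)
  have hh0 : (0 : ℝ) < h := by exact_mod_cast (by omega : 0 < h)
  have hN0 : (0 : ℝ) < N := by exact_mod_cast hN
  have hc0 : (0 : ℝ) < (h * m₀ % N * m₀ % N : ℕ) := by exact_mod_cast hc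
  rw [summand, r1, r2, F32_eq (by positivity) (by positivity)]

/-- The check for the two roots `r` and `N - 1 - r` of `m² + m + 1` modulo `N`. -/
noncomputable def checkRow (N r : ℕ) : Bool := (check N r).and (check N (Nat.sub (Nat.sub N 1) r))

/-- The primes `N < 1000` with `N % 3 = 1`, each with the smaller root of `m² + m + 1` modulo `N`. -/
def table : List (ℕ × ℕ) :=
  [(7, 2), (13, 3), (19, 7), (31, 5), (37, 10), (43, 6), (61, 13), (67, 29), (73, 8), (79, 23),
   (97, 35), (103, 46), (109, 45), (127, 19), (139, 42), (151, 32), (157, 12), (163, 58),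
   (181, 48), (193, 84), (199, 92), (211, 14), (223, 39), (229, 94), (241, 15), (271, 28),
   (277, 116), (283, 44), (307, 17), (313, 98), (331, 31), (337, 128), (349, 122), (367, 83),
   (373, 88), (379, 51), (397, 34), (409, 53), (421, 20), (433, 198), (439, 171), (457, 133),
   (463, 21), (487, 232), (499, 139), (523, 60), (541, 129), (547, 40), (571, 109), (577, 213),
   (601, 24), (607, 210), (613, 65), (619, 252), (631, 43), (643, 177), (661, 296), (673, 255),
   (691, 253), (709, 227), (727, 281), (733, 307), (739, 320), (751, 72), (757, 27), (769, 360),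
   (787, 379), (811, 130), (823, 174), (829, 125), (853, 220), (859, 260), (877, 282),
   (883, 337), (907, 384), (919, 52), (937, 322), (967, 142), (991, 113), (997, 304)]

/-- A composite number below `1000` has a prime factor at most `31`; the factor `3` is excluded by
the congruence. -/
lemma table_or_composite : ∀ N < 1000, N % 3 = 1 → (∃ p ∈ table, p.1 = N) ∨ N = 1 ∨
    ∃ d ∈ [2, 5, 7, 11, 13, 17, 19, 23, 29, 31], d ∣ N ∧ d ≠ N := by
  decide +kernel

lemma table_complete {N : ℕ} (hN : N < 1000) (h3 : N % 3 = 1) (hp : N.Prime) :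
    ∃ p ∈ table, p.1 = N := by
  rcases table_or_composite N hN h3 with h | rfl | ⟨d, hd, hdvd, hne⟩
  · exact h
  · exact absurd hp Nat.not_prime_one
  · rcases (Nat.dvd_prime hp).mp hdvd with rfl | h
    · simp at hd
    · exact absurd h hne

lemma table_root : ∀ p ∈ table, p.2 < p.1 ∧ p.1 ∣ p.2 ^ 2 + p.2 + 1 := by
  decide +kernel

set_option maxRecDepth 100000 in
set_option maxHeartbeats 0 in
/-- The numerical verification proper, carried out by evaluation in the kernel. -/
lemma table_checked : ∀ p ∈ table, checkRow p.1 p.2 = true := by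
  simp only [table, List.forall_mem_cons]
  repeat' apply And.intro
  all_goals first | exact List.forall_mem_nil _ | decide +kernel

lemma root_cases {N r m₀ : ℕ} (hN : N.Prime) (hr : r < N) (hr' : N ∣ r ^ 2 + r + 1) (hm : m₀ < N)
    (hm' : N ∣ m₀ ^ 2 + m₀ + 1) : m₀ = r ∨ m₀ = N - 1 - r := by
  have h1 : (N : ℤ) ∣ (m₀ - r) * (m₀ + r + 1) := by
    have a1 : (N : ℤ) ∣ m₀ ^ 2 + m₀ + 1 := by exact_mod_cast hm'
    have a2 : (N : ℤ) ∣ r ^ 2 + r + 1 := by exact_mod_cast hr'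
    have := dvd_sub a1 a2
    rwa [show ((m₀ : ℤ) ^ 2 + m₀ + 1) - (r ^ 2 + r + 1) = (m₀ - r) * (m₀ + r + 1) by ring] at this
  rcases (Nat.prime_iff_prime_int.mp hN).dvd_or_dvd h1 with ⟨k, hk⟩ | ⟨k, hk⟩
  · left
    have : k < 1 := by nlinarith
    have : -1 < k := by nlinarith
    have : k = 0 := by omega
    subst this
    omega
  · right
    have : k < 2 := by nlinarith
    have : 0 < k := by nlinarith
    have : k = 1 := by omega
    subst this
    omega

/-- For every prime N < 1000 with N ≡ 1 (mod 3), and every integer m with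
m² + m + 1 ≡ 0 (mod N), the real number f(N,m) is not an integer. -/
theorem stmt_15 (N : ℕ) (hN : N.Prime) (hN' : N < 1000) (h3 : N % 3 = 1)
    (m : ℤ) (hm : (N : ℤ) ∣ (m ^ 2 + m + 1)) :
    ¬ ∃ z : ℤ, (z : ℝ) = fval N m := by
  rintro ⟨z, hz⟩
  have hN0 : 0 < N := hN.pos
  obtain ⟨m₀, hm₀⟩ : ∃ m₀ : ℕ, (m₀ : ℤ) = m % N :=
    ⟨(m % N).toNat, Int.toNat_of_nonneg (Int.emod_nonneg _ (by exact_mod_cast hN0.ne'))⟩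
  have hlt : m₀ < N := by
    have := Int.emod_lt_of_pos m (show (0 : ℤ) < N by exact_mod_cast hN0)
    omega
  have hroot : N ∣ m₀ ^ 2 + m₀ + 1 := by
    have h1 : (m₀ : ℤ) ≡ m [ZMOD N] := by
      rw [hm₀]
      exact Int.mod_modEq m N
    have h2 : (m₀ : ℤ) ^ 2 + m₀ + 1 ≡ m ^ 2 + m + 1 [ZMOD N] := ((h1.pow 2).add h1).add_right 1
    have h3 : (N : ℤ) ∣ (m₀ : ℤ) ^ 2 + m₀ + 1 := h2.dvd_iff.mpr hm
    exact_mod_cast h3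
  have hndvd : ¬ N ∣ m₀ := fun h => by
    have h1 : N ∣ m₀ ^ 2 + m₀ := dvd_add (dvd_pow h two_ne_zero) h
    exact hN.one_lt.ne' (Nat.dvd_one.mp ((Nat.dvd_add_right h1).mp hroot))
  have hpos : ∀ h, 0 < h → h < N → 0 < h * m₀ % N := fun h h0 h1 => by
    refine Nat.pos_of_ne_zero fun h2 => ?_
    rcases hN.dvd_mul.mp (Nat.dvd_of_mod_eq_zero h2) with h3 | h3
    · exact absurd (Nat.le_of_dvd h0 h3) (by omega)
    · exact hndvd h3
  obtain ⟨⟨N', r⟩, hmem, rfl⟩ := table_complete hN' h3 hN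
  obtain ⟨hr, hr'⟩ := table_root _ hmem
  have hrow : ((check N' r).and (check N' (N' - 1 - r))) = true := table_checked _ hmem
  rw [Bool.and_eq_true] at hrow
  have hc : check N' m₀ = true := by
    rcases root_cases hN hr hr' hlt hroot with e | e
    · rw [e]
      exact hrow.1
    · rw [e]
      exact hrow.2
  rw [fval_eq hN0 hm₀ hpos] at hz
  exact check_sound hN0 hN' hpos hc z hz
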